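/- arXiv:1511.06330 — 7 statements merged into one kernel-verified Lean document; each statement's English description precedes it below -/
import Mathlib

section
/- Let F be a field of characteristic different from 2 and let n ≥ 1. A symmetric matrix U ∈ M_n(F) is positive semidefinite at every field ordering of F if and only if there exist finitely many matrices A_1, ..., A_N ∈ M_n(F) such that U = A_1ᵀA_1 + ... + A_NᵀA_N (i.e., U is a sum of hermitian squares in the matrix algebra M_n(F) with the transpose involution). -/
open Matrix BigOperators

/-- A field ordering of `F`, given by its cone of nonnegative elements.
This is equivalent to a linear order making `F` a linearly ordered field. -/
structure FieldOrdering (F : Type*) [Field F] where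
  nonneg : F → Prop
  add_nonneg : ∀ {x y : F}, nonneg x → nonneg y → nonneg (x + y)
  mul_nonneg : ∀ {x y : F}, nonneg x → nonneg y → nonneg (x * y)
  total : ∀ x : F, nonneg x ∨ nonneg (-x)
  eq_zero_of : ∀ {x : F}, nonneg x → nonneg (-x) → x = 0

/-- `x >_P 0`. -/
def FieldOrdering.pos {F : Type*} [Field F] (P : FieldOrdering F) (x : F) : Prop :=
  P.nonneg x ∧ x ≠ 0

/-- A matrix is positive semidefinite at an ordering `P` if `xᵀMx ≥_P 0` for all `x`. -/
def Matrix.IsPSDAt {F : Type*} [Field F] {n : ℕ} (P : FieldOrdering F)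
    (M : Matrix (Fin n) (Fin n) F) : Prop :=
  ∀ x : Fin n → F, P.nonneg (x ⬝ᵥ (M *ᵥ x))

/-- A matrix is positive definite at an ordering `P` if `xᵀMx >_P 0` for all `x ≠ 0`. -/
def Matrix.IsPDAt {F : Type*} [Field F] {n : ℕ} (P : FieldOrdering F)
    (M : Matrix (Fin n) (Fin n) F) : Prop :=
  ∀ x : Fin n → F, x ≠ 0 → P.pos (x ⬝ᵥ (M *ᵥ x))

theorem FieldOrdering.nonneg_zero {F : Type*} [Field F] (P : FieldOrdering F) : P.nonneg 0 := by
  rcases P.total 0 with h | h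
  · exact h
  · simpa using h

theorem FieldOrdering.nonneg_mul_self {F : Type*} [Field F] (P : FieldOrdering F) (x : F) :
    P.nonneg (x * x) := by
  rcases P.total x with h | h
  · exact P.mul_nonneg h h
  · simpa using P.mul_nonneg h h

theorem FieldOrdering.nonneg_sum {F : Type*} [Field F] (P : FieldOrdering F) {ι : Type*}
    (s : Finset ι) (f : ι → F) (h : ∀ i, P.nonneg (f i)) : P.nonneg (∑ i ∈ s, f i) := by
  classical
  induction s using Finset.induction_on with
  | empty => simpa using P.nonneg_zero
  | insert a s ha ih => rw [Finset.sum_insert ha]; exact P.add_nonneg (h a) ih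

/-- The semiring `M + xM` for a preordering `M`. -/
def adjoinElt {F : Type*} [Field F] (M : Subsemiring F) (hM : ∀ y : F, y * y ∈ M) (x : F) :
    Subsemiring F where
  carrier := {z | ∃ s ∈ M, ∃ t ∈ M, z = s + x * t}
  zero_mem' := ⟨0, M.zero_mem, 0, M.zero_mem, by ring⟩
  one_mem' := ⟨1, M.one_mem, 0, M.zero_mem, by ring⟩
  add_mem' := by
    rintro _ _ ⟨s, hs, t, ht, rfl⟩ ⟨s', hs', t', ht', rfl⟩
    exact ⟨s + s', M.add_mem hs hs', t + t', M.add_mem ht ht', by ring⟩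
  mul_mem' := by
    rintro _ _ ⟨s, hs, t, ht, rfl⟩ ⟨s', hs', t', ht', rfl⟩
    exact ⟨s * s' + x * x * (t * t'),
      M.add_mem (M.mul_mem hs hs') (M.mul_mem (hM x) (M.mul_mem ht ht')),
      s * t' + t * s', M.add_mem (M.mul_mem hs ht') (M.mul_mem ht hs'), by ring⟩

/-- Artin: an element nonnegative at all orderings is a sum of squares. -/
theorem isSumSq_of_forall_nonneg {F : Type*} [Field F] (hF : (2 : F) ≠ 0) (a : F)
    (ha : ∀ P : FieldOrdering F, P.nonneg a) : IsSumSq a := by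
  by_contra hna
  obtain ⟨M, hTM, hM⟩ := zorn_le_nonempty₀
    {S : Subsemiring F | Subsemiring.sumSq F ≤ S ∧ a ∉ S} (by
      intro c hc hchain y hy
      refine ⟨sSup c, ⟨(hc hy).1.trans (le_sSup hy), ?_⟩, fun z hz => le_sSup hz⟩
      rw [Subsemiring.mem_sSup_of_directedOn ⟨y, hy⟩ hchain.directedOn]
      rintro ⟨s, hs, has⟩
      exact (hc hs).2 has) (Subsemiring.sumSq F)
    ⟨le_rfl, by rwa [Subsemiring.mem_sumSq]⟩
  have haM : a ∉ M := hM.prop.2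
  have hsq : ∀ y : F, y * y ∈ M := fun y =>
    hTM (by rw [Subsemiring.mem_sumSq]; exact IsSumSq.mul_self y)
  have hneg : (-1 : F) ∉ M := by
    intro h
    apply haM
    have e : a = ((a + 1) / 2) * ((a + 1) / 2) + (-1) * (((a - 1) / 2) * ((a - 1) / 2)) := by
      field_simp; ring
    rw [e]
    exact M.add_mem (hsq _) (M.mul_mem h (hsq _))
  have hanti : ∀ x : F, x ∈ M → -x ∈ M → x = 0 := by
    intro x hx hx'
    by_contra h0
    apply hneg
    have e : (-1 : F) = x * (-x) * (x⁻¹ * x⁻¹) := by field_simp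
    rw [e]
    exact M.mul_mem (M.mul_mem hx hx') (hsq _)
  have key : ∀ x : F, x ∉ M → ∃ s ∈ M, ∃ t ∈ M, a = s + x * t := by
    intro x hx
    by_contra hcon
    have hle : M ≤ adjoinElt M hsq x := fun m hm => ⟨m, hm, 0, M.zero_mem, by ring⟩
    have := hM.le_of_ge (y := adjoinElt M hsq x) ⟨hTM.trans hle, hcon⟩ hle
    exact hx (this ⟨0, M.zero_mem, 1, M.one_mem, by ring⟩)
  have htot : ∀ x : F, x ∈ M ∨ -x ∈ M := by
    intro x
    by_contra hcon
    push Not at hcon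
    obtain ⟨s, hs, t, ht, h1⟩ := key x hcon.1
    obtain ⟨s', hs', t', ht', h2⟩ := key (-x) hcon.2
    by_cases h0 : t + t' = 0
    · have : t = 0 := hanti t ht (by rwa [← eq_neg_of_add_eq_zero_right h0])
      apply haM
      rw [h1, this]
      simpa using hs
    · apply haM
      have e : a = (t + t') * (s * t' + s' * t) * ((t + t')⁻¹ * (t + t')⁻¹) := by
        have : a * (t + t') = s * t' + s' * t := by
          linear_combination t' * h1 + t * h2
        rw [← this]
        field_simp
      rw [e]
      exact M.mul_mem (M.mul_mem (M.add_mem ht ht')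
        (M.add_mem (M.mul_mem hs ht') (M.mul_mem hs' ht))) (hsq _)
  exact haM (ha
    { nonneg := fun x => x ∈ M
      add_nonneg := M.add_mem
      mul_nonneg := M.mul_mem
      total := htot
      eq_zero_of := fun {x} => hanti x })

/-- Sums of hermitian squares. -/
def IsSumHermSq {F : Type*} [Field F] {n : ℕ} (U : Matrix (Fin n) (Fin n) F) : Prop :=
  ∃ (N : ℕ) (A : Fin N → Matrix (Fin n) (Fin n) F), U = ∑ i, (A i)ᵀ * A i

theorem IsSumHermSq.zero {F : Type*} [Field F] {n : ℕ} :
    IsSumHermSq (0 : Matrix (Fin n) (Fin n) F) := ⟨0, fun _ => 0, by simp⟩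

theorem IsSumHermSq.add {F : Type*} [Field F] {n : ℕ} {U V : Matrix (Fin n) (Fin n) F}
    (hU : IsSumHermSq U) (hV : IsSumHermSq V) : IsSumHermSq (U + V) := by
  obtain ⟨N, A, rfl⟩ := hU
  obtain ⟨M, B, rfl⟩ := hV
  exact ⟨N + M, Fin.append A B, by simp [Fin.sum_univ_add]⟩

theorem IsSumHermSq.sum {F : Type*} [Field F] {n : ℕ} {ι : Type*} (s : Finset ι)
    (f : ι → Matrix (Fin n) (Fin n) F) (h : ∀ i, IsSumHermSq (f i)) :
    IsSumHermSq (∑ i ∈ s, f i) := by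
  classical
  induction s using Finset.induction_on with
  | empty => simpa using IsSumHermSq.zero
  | insert a s ha ih => rw [Finset.sum_insert ha]; exact (h a).add ih

theorem IsSumHermSq.vecMulVec {F : Type*} [Field F] {n : ℕ} (hn : 1 ≤ n) (w : Fin n → F) :
    IsSumHermSq (Matrix.vecMulVec w w) := by
  refine ⟨1, fun _ => Matrix.of fun k j => if k = ⟨0, hn⟩ then w j else 0, ?_⟩
  ext i j
  simp [Matrix.vecMulVec_apply, Matrix.mul_apply]

theorem IsSumHermSq.smul_vecMulVec {F : Type*} [Field F] {n : ℕ} (hn : 1 ≤ n) (w : Fin n → F)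
    {a : F} (ha : IsSumSq a) : IsSumHermSq (a • Matrix.vecMulVec w w) := by
  induction ha with
  | zero => simpa using IsSumHermSq.zero
  | sq_add c hs ih =>
    rw [add_smul]
    refine IsSumHermSq.add ?_ ih
    have : (c * c) • Matrix.vecMulVec w w = Matrix.vecMulVec (c • w) (c • w) := by
      ext i j
      simp [Matrix.vecMulVec_apply]
      ring
    rw [this]
    exact IsSumHermSq.vecMulVec hn _

/-- A symmetric matrix over a field of characteristic ≠ 2 is positive semidefinite at
every field ordering iff it is a finite sum of hermitian squares `Aᵀ * A`. -/
theorem stmt_0 {F : Type*} [Field F] (hF : (2 : F) ≠ 0) {n : ℕ} (hn : 1 ≤ n)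
    (U : Matrix (Fin n) (Fin n) F) (hU : Uᵀ = U) :
    (∀ P : FieldOrdering F, U.IsPSDAt P) ↔
      ∃ (N : ℕ) (A : Fin N → Matrix (Fin n) (Fin n) F),
        U = ∑ i, (A i)ᵀ * A i := by
  constructor
  · intro h
    change IsSumHermSq U
    have : Invertible (2 : F) := invertibleOfNonzero hF
    have hsymm : LinearMap.IsSymm (Matrix.toBilin' U) := by
      refine ⟨fun x y => ?_⟩
      rw [Matrix.toBilin'_apply', Matrix.toBilin'_apply', RingHom.id_apply,
        Matrix.dotProduct_mulVec, ← Matrix.mulVec_transpose, hU, dotProduct_comm]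
    obtain ⟨v, hv⟩ := LinearMap.BilinForm.exists_orthogonal_basis hsymm
    have hss : ∀ k, IsSumSq (Matrix.toBilin' U (v k) (v k)) := by
      intro k
      apply isSumSq_of_forall_nonneg hF
      intro P
      rw [Matrix.toBilin'_apply']
      exact h P (v k)
    have hUe : U = ∑ k, (Matrix.toBilin' U (v k) (v k)) •
        Matrix.vecMulVec (fun i => v.repr (Pi.single i 1) k)
          (fun i => v.repr (Pi.single i 1) k) := by
      ext i j
      rw [← Matrix.toBilin'_single U i j]
      conv_lhs => rw [← v.sum_repr (Pi.single i 1), ← v.sum_repr (Pi.single j 1)]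
      simp only [map_sum, LinearMap.sum_apply, map_smul, LinearMap.smul_apply, smul_eq_mul,
        Matrix.sum_apply, Matrix.smul_apply, Matrix.vecMulVec_apply]
      refine Finset.sum_congr rfl fun k _ => ?_
      rw [Finset.sum_eq_single k]
      · ring
      · intro l _ hl
        have : Matrix.toBilin' U (v l) (v k) = 0 := hv hl
        simp [this]
      · simp
    rw [hUe]
    exact IsSumHermSq.sum _ _ fun k => IsSumHermSq.smul_vecMulVec hn _ (hss k)
  · rintro ⟨N, A, rfl⟩ P x
    have : x ⬝ᵥ ((∑ i, (A i)ᵀ * A i) *ᵥ x) = ∑ i, ∑ j, (A i *ᵥ x) j * (A i *ᵥ x) j := by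
      rw [Matrix.sum_mulVec, dotProduct_sum]
      refine Finset.sum_congr rfl fun i _ => ?_
      rw [← Matrix.mulVec_mulVec, Matrix.dotProduct_mulVec, Matrix.vecMul_transpose]
      rfl
    rw [this]
    exact P.nonneg_sum _ _ fun i => P.nonneg_sum _ _ fun j => P.nonneg_mul_self _
end

section
/- Let F be a field of characteristic different from 2, let n ≥ 1, let b_1, ..., b_t ∈ F be nonzero, and let U ∈ M_n(F) be symmetric. The following are equivalent: (i) U is positive semidefinite at every field ordering P of F satisfying b_1 >_P 0, ..., b_t >_P 0; (ii) for each tuple e = (e_1, ..., e_t) ∈ {0,1}^t there exist finitely many matrices A_{e,1}, ..., A_{e,N} ∈ M_n(F) such that U = Σ_{e ∈ {0,1}^t} b_1^{e_1}···b_t^{e_t} · Σ_{i=1}^{N} A_{e,i}ᵀ A_{e,i}. -/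
open Matrix BigOperators

/-- Extension of a subsemiring by an element whose negative is not in it. -/
def SubExt {F : Type*} [Field F] (S : Subsemiring F) (hS : ∀ x : F, x * x ∈ S) (d : F) :
    Subsemiring F where
  carrier := {x | ∃ s ∈ S, ∃ t ∈ S, x = s + d * t}
  zero_mem' := ⟨0, S.zero_mem, 0, S.zero_mem, by ring⟩
  one_mem' := ⟨1, S.one_mem, 0, S.zero_mem, by ring⟩
  add_mem' := by
    rintro _ _ ⟨s, hs, t, ht, rfl⟩ ⟨s', hs', t', ht', rfl⟩
    exact ⟨s + s', S.add_mem hs hs', t + t', S.add_mem ht ht', by ring⟩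
  mul_mem' := by
    rintro _ _ ⟨s, hs, t, ht, rfl⟩ ⟨s', hs', t', ht', rfl⟩
    exact ⟨s * s' + d * d * (t * t'),
      S.add_mem (S.mul_mem hs hs') (S.mul_mem (hS d) (S.mul_mem ht ht')),
      s * t' + t * s', S.add_mem (S.mul_mem hs ht') (S.mul_mem ht hs'), by ring⟩

theorem le_SubExt {F : Type*} [Field F] (S : Subsemiring F) (hS : ∀ x : F, x * x ∈ S) (d : F) :
    S ≤ SubExt S hS d := fun s hs => ⟨s, hs, 0, S.zero_mem, by ring⟩

theorem mem_SubExt {F : Type*} [Field F] (S : Subsemiring F) (hS : ∀ x : F, x * x ∈ S) (d : F) :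
    d ∈ SubExt S hS d := ⟨0, S.zero_mem, 1, S.one_mem, by ring⟩

theorem SubExt_proper {F : Type*} [Field F] (S : Subsemiring F)
    (hS : ∀ x : F, x * x ∈ S) (h1 : (-1 : F) ∉ S) (d : F) (hd : d ∉ S) :
    (-1 : F) ∉ SubExt S hS (-d) := by
  rintro ⟨s, hs, t, ht, h⟩
  by_cases h0 : t = 0
  · subst h0
    apply h1
    rw [h]
    simpa using hs
  · apply hd
    have : d = (t * (1 + s)) * (t⁻¹ * t⁻¹) := by
      have h2 : 1 + s = d * t := by linear_combination (-1 : F) * h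
      rw [h2]
      field_simp
    rw [this]
    exact S.mul_mem (S.mul_mem ht (S.add_mem S.one_mem hs)) (hS _)

theorem exists_ordering_of_proper {F : Type*} [Field F] (S : Subsemiring F)
    (hS : ∀ x : F, x * x ∈ S) (h1 : (-1 : F) ∉ S) :
    ∃ P : FieldOrdering F, ∀ x ∈ S, P.nonneg x := by
  obtain ⟨Q, hSQ, hQ⟩ := zorn_le_nonempty₀ {Q : Subsemiring F | (-1 : F) ∉ Q} (by
    intro c hc hchain y hy
    refine ⟨sSup c, ?_, fun z hz => le_sSup hz⟩
    intro hmem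
    rw [Subsemiring.mem_sSup_of_directedOn ⟨y, hy⟩ hchain.directedOn] at hmem
    obtain ⟨s, hs, hs'⟩ := hmem
    exact hc hs hs') S h1
  have hQ1 : (-1 : F) ∉ Q := hQ.prop
  have hQs : ∀ x : F, x * x ∈ Q := fun x => hSQ (hS x)
  refine ⟨⟨fun x => x ∈ Q, Q.add_mem, Q.mul_mem, ?_, ?_⟩, fun x hx => hSQ hx⟩
  · intro x
    by_contra hcon
    push Not at hcon
    have := hQ.le_of_ge (SubExt_proper Q hQs hQ1 x hcon.1) (le_SubExt Q hQs (-x))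
    exact hcon.2 (this (mem_SubExt Q hQs (-x)))
  · intro x hx hx'
    by_contra h0
    apply hQ1
    have : (-1 : F) = (x * (-x)) * (x⁻¹ * x⁻¹) := by field_simp
    rw [this]
    exact Q.mul_mem (Q.mul_mem hx hx') (hQs _)

theorem mem_of_nonneg {F : Type*} [Field F] (hF : (2 : F) ≠ 0) (S : Subsemiring F)
    (hS : ∀ x : F, x * x ∈ S) (d : F)
    (h : ∀ P : FieldOrdering F, (∀ x ∈ S, P.nonneg x) → P.nonneg d) : d ∈ S := by
  by_contra hd
  by_cases h1 : (-1 : F) ∈ S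
  · apply hd
    have : d = ((d + 1) / 2) * ((d + 1) / 2) + (-1) * (((d - 1) / 2) * ((d - 1) / 2)) := by
      field_simp
      ring
    rw [this]
    exact S.add_mem (hS _) (S.mul_mem h1 (hS _))
  · obtain ⟨P, hP⟩ := exists_ordering_of_proper (SubExt S hS (-d))
      (fun x => le_SubExt S hS _ (hS x)) (SubExt_proper S hS h1 d hd)
    have h2 := h P (fun x hx => hP x (le_SubExt S hS _ hx))
    have h3 := hP _ (mem_SubExt S hS (-d))
    have := P.eq_zero_of h2 h3
    exact hd (this ▸ S.zero_mem)

/-- The weight `b^e`. -/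
def wt {F : Type*} [Field F] {t : ℕ} (b : Fin t → F) (e : Fin t → Bool) : F :=
  ∏ j, if e j then b j else 1

/-- The matrix cone. -/
def Cone {F : Type*} [Field F] (n : ℕ) {t : ℕ} (b : Fin t → F) :
    AddSubmonoid (Matrix (Fin n) (Fin n) F) :=
  AddSubmonoid.closure {M | ∃ e A, M = wt b e • (Aᵀ * A)}

theorem Cone_rep {F : Type*} [Field F] (n : ℕ) {t : ℕ} (b : Fin t → F)
    (U : Matrix (Fin n) (Fin n) F) (hU : U ∈ Cone n b) :
    ∃ (N : ℕ) (A : (Fin t → Bool) → Fin N → Matrix (Fin n) (Fin n) F),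
        U = ∑ e : Fin t → Bool,
          (∏ j, if e j then b j else 1) • ∑ i, (A e i)ᵀ * A e i := by
  induction hU using AddSubmonoid.closure_induction with
  | mem x hx =>
    obtain ⟨e, A, rfl⟩ := hx
    refine ⟨1, fun e' _ => if e' = e then A else 0, ?_⟩
    rw [Finset.sum_eq_single e]
    · simp [wt]
    · intro e' _ h
      simp [h]
    · simp
  | zero => exact ⟨0, fun _ _ => 0, by simp⟩
  | add x y _ _ hx hy =>
    obtain ⟨N, A, rfl⟩ := hx
    obtain ⟨N', A', rfl⟩ := hy
    refine ⟨N + N', fun e => Fin.append (A e) (A' e), ?_⟩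
    rw [← Finset.sum_add_distrib]
    refine Finset.sum_congr rfl fun e _ => ?_
    rw [Fin.sum_univ_add, smul_add]
    simp

/-- The scalars stabilizing the cone. -/
def Stab {F : Type*} [Field F] (n : ℕ) {t : ℕ} (b : Fin t → F) : Subsemiring F where
  carrier := {a | ∀ M ∈ Cone n b, a • M ∈ Cone n b}
  zero_mem' := by
    intro M _
    rw [zero_smul]
    exact zero_mem _
  one_mem' := by
    intro M h
    rwa [one_smul]
  add_mem' := by
    intro x y hx hy M hM
    rw [add_smul]
    exact add_mem (hx M hM) (hy M hM)
  mul_mem' := by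
    intro x y hx hy M hM
    rw [mul_smul]
    exact hx _ (hy M hM)

theorem mem_Stab_of {F : Type*} [Field F] (n : ℕ) {t : ℕ} (b : Fin t → F) (a : F)
    (h : ∀ e (A : Matrix (Fin n) (Fin n) F), a • (wt b e • (Aᵀ * A)) ∈ Cone n b) :
    a ∈ Stab n b := by
  intro M hM
  induction hM using AddSubmonoid.closure_induction with
  | mem x hx =>
    obtain ⟨e, A, rfl⟩ := hx
    exact h e A
  | zero => rw [smul_zero]; exact zero_mem _
  | add x y _ _ hx hy => rw [smul_add]; exact add_mem hx hy

theorem gen_mem {F : Type*} [Field F] (n : ℕ) {t : ℕ} (b : Fin t → F) (e)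
    (A : Matrix (Fin n) (Fin n) F) : wt b e • (Aᵀ * A) ∈ Cone n b :=
  AddSubmonoid.subset_closure ⟨e, A, rfl⟩

theorem sq_mem_Stab {F : Type*} [Field F] (n : ℕ) {t : ℕ} (b : Fin t → F) (a : F) :
    a * a ∈ Stab n b := by
  refine mem_Stab_of n b _ fun e A => ?_
  have : (a * a) • (wt b e • (Aᵀ * A)) = wt b e • ((a • A)ᵀ * (a • A)) := by
    simp only [transpose_smul, Matrix.smul_mul, Matrix.mul_smul, smul_smul]
    congr 1
    ring
  rw [this]
  exact gen_mem n b e _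

theorem wt_update {F : Type*} [Field F] {t : ℕ} (b : Fin t → F) (e : Fin t → Bool) (j : Fin t)
    (x : Bool) : wt b (Function.update e j x) =
      (if x then b j else 1) * ∏ i ∈ Finset.univ.erase j, if e i then b i else 1 := by
  unfold wt
  rw [← Finset.mul_prod_erase Finset.univ _ (Finset.mem_univ j)]
  congr 1
  · simp
  · refine Finset.prod_congr rfl fun i hi => ?_
    rw [Function.update_of_ne (Finset.ne_of_mem_erase hi)]

theorem b_mem_Stab {F : Type*} [Field F] (n : ℕ) {t : ℕ} (b : Fin t → F) (j : Fin t) :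
    b j ∈ Stab n b := by
  refine mem_Stab_of n b _ fun e A => ?_
  cases hx : e j with
  | false =>
    have h1 := wt_update b e j false
    have h2 := wt_update b e j true
    rw [← hx, Function.update_eq_self, hx] at h1
    have : b j • (wt b e • (Aᵀ * A)) = wt b (Function.update e j true) • (Aᵀ * A) := by
      rw [smul_smul, h1, h2]
      simp
    rw [this]
    exact gen_mem n b _ _
  | true =>
    have h1 := wt_update b e j true
    have h2 := wt_update b e j false
    rw [← hx, Function.update_eq_self, hx] at h1
    have : b j • (wt b e • (Aᵀ * A)) =
        (b j * b j) • (wt b (Function.update e j false) • (Aᵀ * A)) := by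
      rw [smul_smul, smul_smul, h1, h2]
      simp [mul_assoc]
    rw [this]
    exact sq_mem_Stab n b (b j) _ (gen_mem n b _ _)

theorem rank_one_mem {F : Type*} [Field F] {n : ℕ} (hn : 1 ≤ n) {t : ℕ} (b : Fin t → F)
    (c : Fin n → F) : vecMulVec c c ∈ Cone n b := by
  have h : vecMulVec c c = wt b (fun _ => false) •
      ((vecMulVec (Pi.single (⟨0, hn⟩ : Fin n) (1 : F)) c)ᵀ *
        vecMulVec (Pi.single (⟨0, hn⟩ : Fin n) (1 : F)) c) := by
    ext k l
    simp [wt, Matrix.mul_apply, vecMulVec_apply, Pi.single_apply]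
  rw [h]
  exact gen_mem n b _ _

theorem diag_exists {F : Type*} [Field F] (hF : (2 : F) ≠ 0) {n : ℕ}
    (U : Matrix (Fin n) (Fin n) F) (hU : Uᵀ = U) :
    ∃ (m : ℕ) (v : Fin m → Fin n → F) (c : Fin m → Fin n → F),
      U = ∑ i, (v i ⬝ᵥ (U *ᵥ v i)) • vecMulVec (c i) (c i) := by
  haveI : Invertible (2 : F) := invertibleOfNonzero hF
  have hB : ∀ x y, Matrix.toBilin' U x y = x ⬝ᵥ (U *ᵥ y) := fun x y => toBilin'_apply' U x y
  have hsymm : LinearMap.IsSymm (Matrix.toBilin' U) := by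
    constructor
    intro x y
    rw [hB, hB, RingHom.id_apply, dotProduct_mulVec, ← mulVec_transpose, hU, dotProduct_comm]
  obtain ⟨v, hv⟩ := LinearMap.BilinForm.exists_orthogonal_basis hsymm
  refine ⟨_, fun i => v i, fun i k => v.repr (Pi.single k 1) i, ?_⟩
  ext k l
  have h1 : U k l = Matrix.toBilin' U (Pi.single k 1) (Pi.single l 1) := by
    simp [hB]
  rw [h1, ← LinearMap.sum_repr_mul_repr_mul v v, Finsupp.sum_fintype _ _ (by simp), Matrix.sum_apply]
  refine Finset.sum_congr rfl fun i _ => ?_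
  rw [Finsupp.sum_fintype _ _ (by simp), Finset.sum_eq_single i]
  · rw [hB, Matrix.smul_apply, vecMulVec_apply]
    simp only [smul_eq_mul]
    ring
  · intro j _ hj
    have : Matrix.toBilin' U (v i) (v j) = 0 := hv hj.symm
    rw [this]
    simp
  · simp

/-- Nonnegative elements form a subsemiring. -/
def FieldOrdering.sub {F : Type*} [Field F] (P : FieldOrdering F) : Subsemiring F where
  carrier := {x | P.nonneg x}
  zero_mem' := by
    rcases P.total 0 with h | h
    · exact h
    · simpa using h
  one_mem' := by
    rcases P.total 1 with h | h
    · exact h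
    · simpa using P.mul_nonneg h h
  add_mem' := P.add_nonneg
  mul_mem' := P.mul_nonneg

theorem FieldOrdering.sq_mem {F : Type*} [Field F] (P : FieldOrdering F) (x : F) :
    x * x ∈ P.sub := by
  rcases P.total x with h | h
  · exact P.mul_nonneg h h
  · have := P.mul_nonneg h h
    rwa [neg_mul_neg] at this

theorem stmt_1 {F : Type*} [Field F] (hF : (2 : F) ≠ 0) {n : ℕ} (hn : 1 ≤ n)
    {t : ℕ} (b : Fin t → F) (hb : ∀ j, b j ≠ 0)
    (U : Matrix (Fin n) (Fin n) F) (hU : Uᵀ = U) :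
    (∀ P : FieldOrdering F, (∀ j, P.pos (b j)) → U.IsPSDAt P) ↔
      ∃ (N : ℕ) (A : (Fin t → Bool) → Fin N → Matrix (Fin n) (Fin n) F),
        U = ∑ e : Fin t → Bool,
          (∏ j, if e j then b j else 1) • ∑ i, (A e i)ᵀ * A e i := by
  constructor
  · intro h
    apply Cone_rep
    obtain ⟨m, v, c, hd⟩ := diag_exists hF U hU
    rw [hd]
    refine sum_mem fun i _ => ?_
    have : (v i ⬝ᵥ (U *ᵥ v i)) ∈ Stab n b :=
      mem_of_nonneg hF _ (sq_mem_Stab n b) _ fun P hP =>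
        h P (fun j => ⟨hP _ (b_mem_Stab n b j), hb j⟩) (v i)
    exact this _ (rank_one_mem hn b (c i))
  · rintro ⟨N, A, hA⟩ P hP x
    change _ ∈ P.sub
    rw [hA, Matrix.sum_mulVec, dotProduct_sum]
    refine sum_mem fun e _ => ?_
    rw [smul_mulVec, dotProduct_smul, smul_eq_mul]
    refine mul_mem (prod_mem fun j _ => ?_) ?_
    · split_ifs
      · exact (hP j).1
      · exact one_mem _
    · rw [Matrix.sum_mulVec, dotProduct_sum]
      refine sum_mem fun i _ => ?_
      rw [← mulVec_mulVec, dotProduct_mulVec, vecMul_transpose]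
      exact sum_mem fun k _ => P.sq_mem _
end

section
/- Let F be a field of characteristic different from 2, let Φ ∈ M_n(F) be symmetric and invertible, and let σ be the involution on M_n(F) given by σ(X) = ΦXᵀΦ⁻¹. Let b_1, ..., b_t ∈ F be nonzero and let Y be the set of field orderings P of F with b_1 >_P 0, ..., b_t >_P 0. Let a ∈ M_n(F) be invertible with σ(a) = a and such that Φ⁻¹a is positive definite at every P ∈ Y. Then for every invertible u ∈ M_n(F) with σ(u) = u, the following are equivalent: (i) Φ⁻¹u is positive definite at every P ∈ Y; (ii) there exists for each e ∈ {0,1}^t a finite list of matrices X_{e,1}, ..., X_{e,N} ∈ M_n(F) such that u = Σ_{e ∈ {0,1}^t} b_1^{e_1}···b_t^{e_t} · Σ_{i=1}^{N} σ(X_{e,i}) a X_{e,i}. -/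
open Matrix BigOperators

namespace Stmt2Aux

variable {F : Type*} [Field F]

/-- A subsemiring containing all squares. -/
def HasSq (S : Subsemiring F) : Prop := ∀ x : F, x * x ∈ S

theorem inv_mem {S : Subsemiring F} (hS : HasSq S) {x : F} (hx : x ∈ S) : x⁻¹ ∈ S := by
  by_cases h : x = 0
  · subst h; simpa using S.zero_mem
  · have := S.mul_mem hx (hS x⁻¹)
    have e : x * (x⁻¹ * x⁻¹) = x⁻¹ := by field_simp
    rwa [e] at this

theorem all_mem (hF : (2 : F) ≠ 0) {S : Subsemiring F} (hS : HasSq S) (h : (-1 : F) ∈ S) (x : F) :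
    x ∈ S := by
  have := S.add_mem (hS ((x + 1) / 2)) (S.mul_mem h (hS ((x - 1) / 2)))
  have e : (x + 1) / 2 * ((x + 1) / 2) + -1 * ((x - 1) / 2 * ((x - 1) / 2)) = x := by
    field_simp; ring
  rwa [e] at this

/-- `S + y S`. -/
def adj (S : Subsemiring F) (hS : HasSq S) (y : F) : Subsemiring F where
  carrier := {z | ∃ s ∈ S, ∃ r ∈ S, z = s + y * r}
  zero_mem' := ⟨0, S.zero_mem, 0, S.zero_mem, by simp⟩
  one_mem' := ⟨1, S.one_mem, 0, S.zero_mem, by simp⟩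
  add_mem' := by
    rintro _ _ ⟨s, hs, r, hr, rfl⟩ ⟨s', hs', r', hr', rfl⟩
    exact ⟨s + s', S.add_mem hs hs', r + r', S.add_mem hr hr', by ring⟩
  mul_mem' := by
    rintro _ _ ⟨s, hs, r, hr, rfl⟩ ⟨s', hs', r', hr', rfl⟩
    exact ⟨s * s' + (y * y) * (r * r'),
      S.add_mem (S.mul_mem hs hs') (S.mul_mem (hS y) (S.mul_mem hr hr')),
      s * r' + r * s', S.add_mem (S.mul_mem hs hr') (S.mul_mem hr hs'), by ring⟩

theorem le_adj (S : Subsemiring F) (hS : HasSq S) (y : F) : S ≤ adj S hS y :=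
  fun s hs => ⟨s, hs, 0, S.zero_mem, by simp⟩

theorem mem_adj (S : Subsemiring F) (hS : HasSq S) (y : F) : y ∈ adj S hS y :=
  ⟨0, S.zero_mem, 1, S.one_mem, by simp⟩

theorem adj_proper (hF : (2 : F) ≠ 0) (S : Subsemiring F) (hS : HasSq S) (y : F)
    (hy : -y ∉ S) : (-1 : F) ∉ adj S hS y := by
  rintro ⟨s, hs, r, hr, h⟩
  by_cases hr0 : r = 0
  · subst hr0
    apply hy
    apply all_mem hF hS
    rw [h]; simpa using hs
  · apply hy
    have := S.mul_mem (S.add_mem S.one_mem hs) (inv_mem hS hr)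
    have e : (1 + s) * r⁻¹ = -y := by
      field_simp
      linear_combination -h
    rwa [e] at this

theorem exists_ordering (hF : (2 : F) ≠ 0) (S : Subsemiring F) (hS : HasSq S) (x : F)
    (hx : x ∉ S) : ∃ P : FieldOrdering F, (∀ s ∈ S, P.nonneg s) ∧ ¬ P.nonneg x := by
  obtain ⟨M, hM0, hM⟩ := zorn_le_nonempty₀ {R : Subsemiring F | HasSq R ∧ (-1 : F) ∉ R}
    (by
      intro c hc hch R hR
      refine ⟨sSup c, ⟨?_, ?_⟩, fun z hz => le_sSup hz⟩
      · exact fun z => (le_sSup hR) ((hc hR).1 z)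
      · intro h
        rw [Subsemiring.mem_sSup_of_directedOn ⟨R, hR⟩ hch.directedOn] at h
        obtain ⟨Q, hQ, hq⟩ := h
        exact (hc hQ).2 hq)
    (adj S hS (-x))
    ⟨fun z => le_adj S hS _ (hS z), adj_proper hF S hS _ (by simpa using hx)⟩
  have hMsq : HasSq M := hM.prop.1
  have hMp : (-1 : F) ∉ M := hM.prop.2
  have hz : ∀ {z : F}, z ∈ M → -z ∈ M → z = 0 := by
    intro z h1 h2
    by_contra h0
    apply hMp
    have := M.mul_mem h2 (inv_mem hMsq h1)
    have e : -z * z⁻¹ = -1 := by field_simp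
    rwa [e] at this
  refine ⟨⟨fun z => z ∈ M, M.add_mem, M.mul_mem, ?_, hz⟩, ?_, ?_⟩
  · intro z
    by_contra h
    push Not at h
    have h1 := hM.le_of_ge (y := adj M hMsq z)
      ⟨fun w => le_adj M hMsq _ (hMsq w), adj_proper hF M hMsq _ h.2⟩ (le_adj M hMsq z)
    exact h.1 (h1 (mem_adj M hMsq z))
  · exact fun s hs => hM0 (le_adj S hS _ hs)
  · intro h
    have := hz h (hM0 (mem_adj S hS (-x)))
    subst this
    exact hx S.zero_mem

/-- the weights -/
def wt {t : ℕ} (b : Fin t → F) (e : Fin t → Bool) : F := ∏ j, if e j then b j else 1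

/-- Elements `b^e q^2`. -/
def gens {t : ℕ} (b : Fin t → F) : Submonoid F where
  carrier := {x | ∃ e : Fin t → Bool, ∃ q : F, x = wt b e * (q * q)}
  one_mem' := ⟨fun _ => false, 1, by simp [wt]⟩
  mul_mem' := by
    rintro _ _ ⟨e, q, rfl⟩ ⟨e', q', rfl⟩
    refine ⟨fun j => xor (e j) (e' j), (∏ j, if e j && e' j then b j else 1) * (q * q'), ?_⟩
    have : wt b e * wt b e' = wt b (fun j => xor (e j) (e' j)) *
        ((∏ j, if e j && e' j then b j else 1) * (∏ j, if e j && e' j then b j else 1)) := by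
      simp only [wt, ← Finset.prod_mul_distrib]
      refine Finset.prod_congr rfl fun j _ => ?_
      by_cases h1 : e j = true <;> by_cases h2 : e' j = true <;> simp [h1, h2]
    linear_combination (q * q * (q' * q')) * this

theorem gens_sq {t : ℕ} (b : Fin t → F) : HasSq (gens b).subsemiringClosure := by
  intro x
  rw [Submonoid.subsemiringClosure_mem]
  exact AddSubmonoid.subset_closure ⟨fun _ => false, x, by simp [wt]⟩

theorem gens_b {t : ℕ} (b : Fin t → F) (j : Fin t) : b j ∈ (gens b).subsemiringClosure := by
  rw [Submonoid.subsemiringClosure_mem]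
  refine AddSubmonoid.subset_closure ⟨fun i => decide (i = j), 1, ?_⟩
  simp [wt]

theorem mem_of_nonneg (hF : (2 : F) ≠ 0) {t : ℕ} (b : Fin t → F) (hb : ∀ j, b j ≠ 0) (x : F)
    (h : ∀ P : FieldOrdering F, (∀ j, P.pos (b j)) → P.nonneg x) :
    x ∈ (gens b).subsemiringClosure := by
  by_contra hx
  obtain ⟨P, hP, hn⟩ := exists_ordering hF _ (gens_sq b) x hx
  exact hn (h P fun j => ⟨hP _ (gens_b b j), hb j⟩)

/-- representable matrices -/
def Rep {n t : ℕ} (b : Fin t → F) (A V : Matrix (Fin n) (Fin n) F) : Prop :=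
  ∃ (N : ℕ) (X : (Fin t → Bool) → Fin N → Matrix (Fin n) (Fin n) F),
    V = ∑ e : Fin t → Bool, wt b e • ∑ i, (X e i)ᵀ * A * X e i

theorem rep_zero {n t : ℕ} (b : Fin t → F) (A : Matrix (Fin n) (Fin n) F) : Rep b A 0 :=
  ⟨0, fun _ _ => 0, by simp⟩

theorem rep_add {n t : ℕ} (b : Fin t → F) (A : Matrix (Fin n) (Fin n) F)
    {V W : Matrix (Fin n) (Fin n) F} : Rep b A V → Rep b A W → Rep b A (V + W) := by
  rintro ⟨N, X, rfl⟩ ⟨N', X', rfl⟩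
  refine ⟨N + N', fun e => Fin.append (X e) (X' e), ?_⟩
  rw [← Finset.sum_add_distrib]
  refine Finset.sum_congr rfl fun e _ => ?_
  rw [Fin.sum_univ_add]
  simp [smul_add]

theorem rep_sum {n t : ℕ} (b : Fin t → F) (A : Matrix (Fin n) (Fin n) F) {ι : Type*}
    (s : Finset ι) (f : ι → Matrix (Fin n) (Fin n) F) (h : ∀ i, Rep b A (f i)) :
    Rep b A (∑ i ∈ s, f i) :=
  Finset.sum_induction f (Rep b A) (fun _ _ => rep_add b A) (rep_zero b A) fun i _ => h i

theorem rep_smul {n t : ℕ} (b : Fin t → F) (A Y : Matrix (Fin n) (Fin n) F) (c : F)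
    (hc : c ∈ (gens b).subsemiringClosure) : Rep b A (c • (Yᵀ * A * Y)) := by
  rw [Submonoid.subsemiringClosure_mem] at hc
  induction hc using AddSubmonoid.closure_induction with
  | mem x hx =>
    obtain ⟨e, q, rfl⟩ := hx
    refine ⟨1, fun e' _ => if e' = e then q • Y else 0, ?_⟩
    rw [Finset.sum_eq_single e]
    · simp [smul_smul, mul_assoc]
    · intro e' _ h
      simp [h]
    · simp
  | zero => simpa using rep_zero b A
  | add x y _ _ hx hy => rw [add_smul]; exact rep_add b A hx hy

theorem exists_ne (hF : (2 : F) ≠ 0) {n : ℕ} (A : Matrix (Fin n) (Fin n) F) (hA : Aᵀ = A)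
    (h0 : A ≠ 0) : ∃ w : Fin n → F, w ⬝ᵥ (A *ᵥ w) ≠ 0 := by
  by_contra! h
  apply h0
  ext i j
  have h1 := h (Pi.single i 1 + Pi.single j 1)
  have h2 := h (Pi.single i 1)
  have h3 := h (Pi.single j 1)
  have h4 : A j i = A i j := congrFun (congrFun hA i) j
  simp [mulVec_add, add_dotProduct, dotProduct_add] at h1 h2 h3
  simp only [h2, h3, h4] at h1
  have : 2 * A i j = 0 := by linear_combination h1
  simpa [hF] using this

theorem diag (hF : (2 : F) ≠ 0) {n : ℕ} (U : Matrix (Fin n) (Fin n) F) (hU : Uᵀ = U) :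
    ∃ (m : ℕ) (v r : Fin m → (Fin n → F)),
      U = ∑ k, (v k ⬝ᵥ (U *ᵥ v k)) • vecMulVec (r k) (r k) := by
  haveI : Invertible (2 : F) := invertibleOfNonzero hF
  have hB : LinearMap.IsSymm (Matrix.toBilin' U) := by
    constructor
    intro x y
    simp only [Matrix.toBilin'_apply', RingHom.id_apply]
    rw [dotProduct_mulVec, ← mulVec_transpose, hU, dotProduct_comm]
  obtain ⟨v, hv⟩ := LinearMap.BilinForm.exists_orthogonal_basis hB
  refine ⟨_, v, fun k i => v.repr (Pi.single i 1) k, ?_⟩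
  ext i j
  have h1 : U i j = Matrix.toBilin' U (Pi.single i 1) (Pi.single j 1) := by
    simp [Matrix.toBilin'_apply']
  rw [h1]
  conv_lhs => rw [← v.sum_repr (Pi.single i 1), ← v.sum_repr (Pi.single j 1)]
  simp only [map_sum, LinearMap.sum_apply, map_smul, LinearMap.smul_apply, Matrix.sum_apply,
    Matrix.smul_apply, vecMulVec_apply, smul_eq_mul]
  simp only [Finset.mul_sum]
  refine Finset.sum_congr rfl fun k _ => ?_
  rw [Finset.sum_eq_single k]
  · rw [Matrix.toBilin'_apply']; ring
  · intro l _ hl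
    have : Matrix.toBilin' U (v k) (v l) = 0 := hv hl.symm
    have h' : Matrix.toBilin' U (v l) (v k) = 0 := hv hl
    simp [this, h']
  · simp

theorem rep_of_pd (hF : (2 : F) ≠ 0) {n t : ℕ} (b : Fin t → F) (hb : ∀ j, b j ≠ 0)
    (A U : Matrix (Fin n) (Fin n) F) (hA : Aᵀ = A) (hU : Uᵀ = U) (hAu : IsUnit A)
    (hpA : ∀ P : FieldOrdering F, (∀ j, P.pos (b j)) → A.IsPDAt P)
    (hpU : ∀ P : FieldOrdering F, (∀ j, P.pos (b j)) → U.IsPDAt P) : Rep b A U := by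
  rcases isEmpty_or_nonempty (Fin n) with hn | hn
  · rw [Subsingleton.elim U 0]; exact rep_zero b A
  obtain ⟨w, hw⟩ := exists_ne hF A hA hAu.ne_zero
  have hw0 : w ≠ 0 := by rintro rfl; simp at hw
  have hwm := inv_mem (gens_sq b)
    (mem_of_nonneg hF b hb _ fun P hP => (hpA P hP w hw0).1)
  obtain ⟨m, v, r, h⟩ := diag hF U hU
  rw [h]
  refine rep_sum b A _ _ fun k => ?_
  have hk : v k ⬝ᵥ (U *ᵥ v k) ∈ (gens b).subsemiringClosure := by
    by_cases h0 : v k = 0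
    · rw [h0]; simpa using Subsemiring.zero_mem _
    · exact mem_of_nonneg hF b hb _ fun P hP => (hpU P hP _ h0).1
  have key : vecMulVec (r k) (r k) =
      (w ⬝ᵥ (A *ᵥ w))⁻¹ • ((vecMulVec w (r k))ᵀ * A * vecMulVec w (r k)) := by
    rw [transpose_vecMulVec, Matrix.mul_assoc, mul_vecMulVec, vecMulVec_mul_vecMulVec]
    ext i j
    simp [vecMulVec_apply]
    field_simp
  rw [key, smul_smul]
  exact rep_smul b A _ _ (Subsemiring.mul_mem _ hk hwm)

theorem nn_sq (P : FieldOrdering F) (x : F) : P.nonneg (x * x) := by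
  rcases P.total x with h | h
  · exact P.mul_nonneg h h
  · simpa using P.mul_nonneg h h

theorem nn_zero (P : FieldOrdering F) : P.nonneg 0 := by simpa using nn_sq P 0

theorem nn_sum (P : FieldOrdering F) {ι : Type*} (s : Finset ι) (f : ι → F)
    (h : ∀ i, P.nonneg (f i)) : P.nonneg (∑ i ∈ s, f i) :=
  Finset.sum_induction f P.nonneg (fun _ _ => P.add_nonneg) (nn_zero P) fun i _ => h i

theorem eq_zero_of_sum (P : FieldOrdering F) {ι : Type*} [Fintype ι] (f : ι → F)
    (h : ∀ i, P.nonneg (f i)) (h0 : ∑ i, f i = 0) (i : ι) : f i = 0 := by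
  classical
  have := Finset.add_sum_erase Finset.univ f (Finset.mem_univ i)
  apply P.eq_zero_of (h i)
  have e : -f i = ∑ x ∈ Finset.univ.erase i, f x := by linear_combination -h0 - this
  rw [e]
  exact nn_sum P _ _ h

theorem wt_nn (P : FieldOrdering F) {t : ℕ} (b : Fin t → F) (hP : ∀ j, P.pos (b j))
    (e : Fin t → Bool) : P.nonneg (wt b e) := by
  have h1 : P.nonneg 1 := by simpa using nn_sq P 1
  refine Finset.prod_induction _ P.nonneg (fun _ _ => P.mul_nonneg) h1 fun j _ => ?_
  split_ifs
  · exact (hP j).1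
  · exact h1

theorem wt_ne {t : ℕ} (b : Fin t → F) (hb : ∀ j, b j ≠ 0) (e : Fin t → Bool) : wt b e ≠ 0 := by
  refine Finset.prod_ne_zero_iff.2 fun j _ => ?_
  split_ifs
  · exact hb j
  · exact one_ne_zero

theorem pd_of_rep {n t : ℕ} (b : Fin t → F) (hb : ∀ j, b j ≠ 0)
    (A U : Matrix (Fin n) (Fin n) F) (hUu : IsUnit U) (P : FieldOrdering F)
    (hP : ∀ j, P.pos (b j)) (hpA : A.IsPDAt P) (h : Rep b A U) : U.IsPDAt P := by
  obtain ⟨N, X, h⟩ := h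
  have hA0 : ∀ y, P.nonneg (y ⬝ᵥ (A *ᵥ y)) := by
    intro y
    by_cases hy : y = 0
    · subst hy; simpa using nn_zero P
    · exact (hpA y hy).1
  have hmul : ∀ x, U *ᵥ x = ∑ e, wt b e • ∑ i, (X e i)ᵀ *ᵥ (A *ᵥ (X e i *ᵥ x)) := by
    intro x
    rw [h]
    simp [sum_mulVec, smul_mulVec, mulVec_mulVec, Matrix.mul_assoc]
  have hform : ∀ x, x ⬝ᵥ (U *ᵥ x) =
      ∑ e, wt b e * ∑ i, (X e i *ᵥ x) ⬝ᵥ (A *ᵥ (X e i *ᵥ x)) := by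
    intro x
    rw [hmul]
    simp only [dotProduct_sum, dotProduct_smul, smul_eq_mul]
    refine Finset.sum_congr rfl fun e _ => ?_
    congr 1
    refine Finset.sum_congr rfl fun i _ => ?_
    rw [dotProduct_mulVec, vecMul_transpose]
  have hn2 : ∀ x e, P.nonneg (wt b e * ∑ i, (X e i *ᵥ x) ⬝ᵥ (A *ᵥ (X e i *ᵥ x))) :=
    fun x e => P.mul_nonneg (wt_nn P b hP e) (nn_sum P _ _ fun i => hA0 _)
  intro x hx
  refine ⟨?_, fun h0 => hx ?_⟩
  · rw [hform]
    exact nn_sum P _ _ (hn2 x)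
  · rw [hform] at h0
    have hz : ∀ e i, X e i *ᵥ x = 0 := by
      intro e i
      have h1 := eq_zero_of_sum P _ (hn2 x) h0 e
      have h2 := (mul_eq_zero.1 h1).resolve_left (wt_ne b hb e)
      have h3 := eq_zero_of_sum P _ (fun i => hA0 _) h2 i
      by_contra h4
      exact (hpA _ h4).2 h3
    have hU0 : U *ᵥ x = 0 := by rw [hmul]; simp [hz]
    exact (Matrix.mulVec_injective_of_isUnit hUu) (by simpa using hU0)

end Stmt2Aux

/-- Invertible case of the main theorem, split orthogonal case: for `σ = ad_Φ` and an
invertible σ-symmetric `a` with `Φ⁻¹a` positive definite on `Y = H(b₁,…,b_t)`,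
an invertible σ-symmetric `u` has `Φ⁻¹u` positive definite at all `P ∈ Y` iff `u` is a
weighted sum of elements `σ(X) a X` with weights `b₁^{e₁} ⋯ b_t^{e_t}`. -/
theorem stmt_2 {F : Type*} [Field F] (hF : (2 : F) ≠ 0) {n : ℕ}
    (Φ : Matrix (Fin n) (Fin n) F) (hΦsym : Φᵀ = Φ) (hΦ : IsUnit Φ.det)
    {t : ℕ} (b : Fin t → F) (hb : ∀ j, b j ≠ 0)
    (a : Matrix (Fin n) (Fin n) F) (ha : IsUnit a) (haσ : Φ * aᵀ * Φ⁻¹ = a)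
    (hamax : ∀ P : FieldOrdering F, (∀ j, P.pos (b j)) → (Φ⁻¹ * a).IsPDAt P)
    (u : Matrix (Fin n) (Fin n) F) (hu : IsUnit u) (huσ : Φ * uᵀ * Φ⁻¹ = u) :
    (∀ P : FieldOrdering F, (∀ j, P.pos (b j)) → (Φ⁻¹ * u).IsPDAt P) ↔
      ∃ (N : ℕ) (X : (Fin t → Bool) → Fin N → Matrix (Fin n) (Fin n) F),
        u = ∑ e : Fin t → Bool,
          (∏ j, if e j then b j else 1) •
            ∑ i, (Φ * (X e i)ᵀ * Φ⁻¹) * a * X e i := by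
  have hΦt : (Φ⁻¹)ᵀ = Φ⁻¹ := by rw [transpose_nonsing_inv, hΦsym]
  have hΦu : IsUnit Φ⁻¹ := by
    rw [Matrix.isUnit_nonsing_inv_iff, Matrix.isUnit_iff_isUnit_det]; exact hΦ
  have hsym : ∀ c : Matrix (Fin n) (Fin n) F, Φ * cᵀ * Φ⁻¹ = c → (Φ⁻¹ * c)ᵀ = Φ⁻¹ * c := by
    intro c hc
    conv_rhs => rw [← hc]
    rw [transpose_mul, hΦt, Matrix.mul_assoc, Matrix.nonsing_inv_mul_cancel_left _ _ hΦ]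
  have hrep : (∃ (N : ℕ) (X : (Fin t → Bool) → Fin N → Matrix (Fin n) (Fin n) F),
        u = ∑ e : Fin t → Bool,
          (∏ j, if e j then b j else 1) •
            ∑ i, (Φ * (X e i)ᵀ * Φ⁻¹) * a * X e i) ↔ Stmt2Aux.Rep b (Φ⁻¹ * a) (Φ⁻¹ * u) := by
    refine exists_congr fun N => exists_congr fun X => ?_
    have e1 : (∑ e : Fin t → Bool, (∏ j, if e j then b j else 1) •
            ∑ i, (Φ * (X e i)ᵀ * Φ⁻¹) * a * X e i) =
        Φ * ∑ e : Fin t → Bool, Stmt2Aux.wt b e • ∑ i, (X e i)ᵀ * (Φ⁻¹ * a) * X e i := by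
      simp only [Matrix.mul_sum, Matrix.mul_smul, Stmt2Aux.wt, Matrix.mul_assoc]
    rw [e1]
    constructor
    · intro h
      rw [h, Matrix.nonsing_inv_mul_cancel_left _ _ hΦ]
    · intro h
      rw [← h, Matrix.mul_nonsing_inv_cancel_left _ _ hΦ]
  rw [hrep]
  constructor
  · intro h
    exact Stmt2Aux.rep_of_pd hF b hb _ _ (hsym a haσ) (hsym u huσ) (hΦu.mul ha) hamax h
  · intro h P hP
    exact Stmt2Aux.pd_of_rep b hb _ _ (hΦu.mul hu) P hP (hamax P hP) h
end

section
/- Let D be a division ring of characteristic different from 2, let ϑ be an involution on D, let ε ∈ {−1, 1}, and let h be an ε-hermitian form (with respect to ϑ) on a right D-vector space M. If h(x, x) = 0 for all x ∈ M, then either h is identically zero, or ϑ is the identity map on D and ε = −1 (in which case D is commutative). -/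
open Matrix BigOperators

/-- If an ε-hermitian form over a division ring with involution (of characteristic ≠ 2)
satisfies `h(x,x) = 0` for all `x`, then `h = 0`, or the involution is the identity
and `ε = -1`. -/
theorem stmt_4 {D : Type*} [DivisionRing D] (hD : (2 : D) ≠ 0)
    (ϑ : D → D)
    (hϑadd : ∀ x y : D, ϑ (x + y) = ϑ x + ϑ y)
    (hϑmul : ∀ x y : D, ϑ (x * y) = ϑ y * ϑ x)
    (hϑinv : ∀ x : D, ϑ (ϑ x) = x)
    (ε : D) (hε : ε = 1 ∨ ε = -1)
    {M : Type*} [AddCommGroup M] [Module Dᵐᵒᵖ M]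
    (h : M → M → D)
    (haddl : ∀ x x' y : M, h (x + x') y = h x y + h x' y)
    (haddr : ∀ x y y' : M, h x (y + y') = h x y + h x y')
    (hsml : ∀ (d : D) (x y : M), h (MulOpposite.op d • x) y = ϑ d * h x y)
    (hsmr : ∀ (d : D) (x y : M), h x (MulOpposite.op d • y) = h x y * d)
    (hherm : ∀ x y : M, h y x = ε * ϑ (h x y))
    (hiso : ∀ x : M, h x x = 0) :
    (∀ x y : M, h x y = 0) ∨ ((∀ d : D, ϑ d = d) ∧ ε = -1) := by
  by_cases h0 : ∀ x y : M, h x y = 0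
  · exact Or.inl h0
  right
  push Not at h0
  obtain ⟨x, y, hxy⟩ := h0
  have h1 : ϑ 1 = 1 := by
    have e := hϑmul 1 (ϑ 1)
    rw [one_mul, hϑinv, one_mul] at e
    exact e.symm
  have key : ∀ d : D, d + ε * ϑ d = 0 := by
    intro d
    have e1 : h x (MulOpposite.op ((h x y)⁻¹ * d) • y) = d := by
      rw [hsmr, mul_inv_cancel_left₀ hxy]
    have e2 := hherm x (MulOpposite.op ((h x y)⁻¹ * d) • y)
    have e3 := hiso (x + MulOpposite.op ((h x y)⁻¹ * d) • y)
    rw [haddl, haddr, haddr, hiso, hiso, e2, e1, zero_add, add_zero] at e3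
    exact e3
  have hε' : ε = -1 := by
    have e := key 1
    rw [h1, mul_one] at e
    exact (neg_eq_of_add_eq_zero_right e).symm
  refine ⟨fun d => ?_, hε'⟩
  have e := key d
  rw [hε', neg_one_mul, ← sub_eq_add_neg, sub_eq_zero] at e
  exact e.symm
end

section
/- Let D be a division ring of characteristic different from 2, let ϑ be an involution on D, and let ε ∈ {−1, 1}; assume it is not the case that both ϑ is the identity on D and ε = −1. Let H ∈ M_ℓ(D) be a matrix satisfying ϑ(H)ᵀ = εH, where ϑ is applied entrywise. Then there exist an invertible matrix G ∈ M_ℓ(D), an integer k with 0 ≤ k ≤ ℓ, and nonzero elements u_1, ..., u_k ∈ D with ϑ(u_i) = ε u_i, such that ϑ(G)ᵀ H G = diag(u_1, ..., u_k, 0, ..., 0). -/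
open Matrix

namespace HermDiag

variable {D : Type*} [DivisionRing D] [StarRing D]

/-- The conclusion of the theorem, for a star division ring. -/
def Good (ε : D) {n : ℕ} (H : Matrix (Fin n) (Fin n) D) : Prop :=
  ∃ G : Matrix (Fin n) (Fin n) D, IsUnit G ∧
    ∃ k : ℕ, k ≤ n ∧
      ∃ u : Fin n → D,
        (∀ i : Fin n, (i : ℕ) < k → u i ≠ 0 ∧ star (u i) = ε * u i) ∧
        (∀ i : Fin n, k ≤ (i : ℕ) → u i = 0) ∧
        Gᴴ * H * G = Matrix.diagonal u

theorem good_congr {ε : D} {n : ℕ} {H P : Matrix (Fin n) (Fin n) D} (hP : IsUnit P)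
    (h : Good ε (Pᴴ * H * P)) : Good ε H := by
  obtain ⟨G, hG, k, hk, u, h1, h2, h3⟩ := h
  refine ⟨P * G, hP.mul hG, k, hk, u, h1, h2, ?_⟩
  rw [← h3, Matrix.conjTranspose_mul]
  simp only [Matrix.mul_assoc]

theorem herm_congr {ε : D} (hε : ε = 1 ∨ ε = -1) {n : ℕ} {H P : Matrix (Fin n) (Fin n) D}
    (hH : Hᴴ = ε • H) : (Pᴴ * H * P)ᴴ = ε • (Pᴴ * H * P) := by
  simp only [Matrix.conjTranspose_mul, Matrix.conjTranspose_conjTranspose, hH]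
  rcases hε with rfl | rfl <;> simp [Matrix.mul_assoc]

/-- One by one block followed by a block `M`. -/
def blk {n : ℕ} (x : D) (M : Matrix (Fin n) (Fin n) D) :
    Matrix (Fin (n + 1)) (Fin (n + 1)) D :=
  fun i j => Fin.cases (Fin.cases x (fun _ => 0) j) (fun i => Fin.cases 0 (fun j => M i j) j) i

theorem blk_mul {n : ℕ} (x y : D) (M N : Matrix (Fin n) (Fin n) D) :
    blk x M * blk y N = blk (x * y) (M * N) := by
  ext i j
  rw [Matrix.mul_apply, Fin.sum_univ_succ]
  refine Fin.cases ?_ (fun i => ?_) i <;> refine Fin.cases ?_ (fun j => ?_) j <;>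
    simp [blk, Matrix.mul_apply]

theorem blk_diag {n : ℕ} (x : D) (u : Fin n → D) :
    blk x (Matrix.diagonal u) = Matrix.diagonal (Fin.cons x u : Fin (n + 1) → D) := by
  ext i j
  refine Fin.cases ?_ (fun i => ?_) i <;> refine Fin.cases ?_ (fun j => ?_) j <;>
    simp [blk, Matrix.diagonal_apply, Fin.succ_ne_zero, (Fin.succ_ne_zero _).symm]

theorem blk_one {n : ℕ} : blk (1 : D) (1 : Matrix (Fin n) (Fin n) D) = 1 := by
  ext i j
  refine Fin.cases ?_ (fun i => ?_) i <;> refine Fin.cases ?_ (fun j => ?_) j <;>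
    simp [blk, Matrix.one_apply, Fin.succ_ne_zero, (Fin.succ_ne_zero _).symm]

theorem blk_conj {n : ℕ} (x : D) (M : Matrix (Fin n) (Fin n) D) :
    (blk x M)ᴴ = blk (star x) Mᴴ := by
  ext i j
  refine Fin.cases ?_ (fun i => ?_) i <;> refine Fin.cases ?_ (fun j => ?_) j <;>
    simp [blk, Matrix.conjTranspose_apply]

theorem good_blk {ε : D} {n : ℕ} {a : D} (ha : a ≠ 0) (has : star a = ε * a)
    {M : Matrix (Fin n) (Fin n) D} (h : Good ε M) : Good ε (blk a M) := by
  obtain ⟨G, ⟨G, rfl⟩, k, hk, u, h1, h2, h3⟩ := h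
  refine ⟨blk 1 G, ⟨⟨blk 1 G, blk 1 (G⁻¹).1, ?_, ?_⟩, rfl⟩, k + 1, by omega, Fin.cons a u, ?_, ?_, ?_⟩
  · rw [blk_mul]; simp [blk_one]
  · rw [blk_mul]; simp [blk_one]
  · intro i
    refine Fin.cases ?_ (fun i => ?_) i
    · intro _; exact ⟨ha, has⟩
    · intro hi; exact h1 i (by simpa using hi)
  · intro i
    refine Fin.cases ?_ (fun i => ?_) i
    · intro hi; simp at hi
    · intro hi; exact h2 i (by simpa using hi)
  · rw [blk_conj, blk_mul, blk_mul, h3, ← blk_diag]; simp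

theorem unit_add {n : ℕ} {N : Matrix (Fin n) (Fin n) D} (h : N * N = 0) : IsUnit (1 + N) := by
  refine ⟨⟨1 + N, 1 - N, ?_, ?_⟩, rfl⟩ <;> simp [mul_sub, add_mul, sub_mul, mul_add, h]

/-- Clearing the first row and column. -/
theorem good_clear {ε : D} (hε : ε = 1 ∨ ε = -1) {n : ℕ}
    (ih : ∀ M : Matrix (Fin n) (Fin n) D, Mᴴ = ε • M → Good ε M)
    {H : Matrix (Fin (n + 1)) (Fin (n + 1)) D} (hH : Hᴴ = ε • H) (h0 : H 0 0 ≠ 0) :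
    Good ε H := by
  let N : Matrix (Fin (n + 1)) (Fin (n + 1)) D :=
    fun i j => Fin.cases (Fin.cases 0 (fun j => - ((H 0 0)⁻¹ * H 0 j.succ)) j) (fun _ => 0) i
  have hNs : ∀ i j, N (Fin.succ i) j = 0 := fun i j => rfl
  have hN0 : ∀ i, N i 0 = 0 := fun i => by refine Fin.cases rfl (fun i => rfl) i
  have hN : N * N = 0 := by
    ext i j
    rw [Matrix.mul_apply, Fin.sum_univ_succ]
    simp [hNs, hN0]
  apply good_congr (unit_add hN)
  have hK := herm_congr (P := 1 + N) hε hH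
  set K := (1 + N)ᴴ * H * (1 + N) with hKdef
  have hrow : ∀ j, ((1 + N)ᴴ * H : Matrix (Fin (n + 1)) (Fin (n + 1)) D) 0 j = H 0 j := by
    intro j
    rw [Matrix.mul_apply, Fin.sum_univ_succ]
    simp [Matrix.conjTranspose_apply, hN0, Matrix.one_apply, Fin.succ_ne_zero]
  have hK00 : K 0 0 = H 0 0 := by
    rw [hKdef, Matrix.mul_apply, Fin.sum_univ_succ]
    rw [hrow]
    simp [hN0, Matrix.one_apply, Fin.succ_ne_zero]
  have hK0s : ∀ j : Fin n, K 0 j.succ = 0 := by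
    intro j
    rw [hKdef, Matrix.mul_add, Matrix.add_apply, Matrix.mul_one, hrow, Matrix.mul_apply,
      Fin.sum_univ_succ]
    have : N 0 j.succ = - ((H 0 0)⁻¹ * H 0 j.succ) := rfl
    rw [hrow]
    simp [hNs, this, h0]
  have hKe : ∀ i j, star (K j i) = ε * K i j := fun i j => by
    have := congrFun (congrFun hK i) j
    simpa [Matrix.conjTranspose_apply] using this
  have hε0 : ε ≠ 0 := by rcases hε with rfl | rfl <;> simp
  have hKs0 : ∀ j : Fin n, K j.succ 0 = 0 := by
    intro j
    have := hKe j.succ 0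
    rw [hK0s] at this
    simpa [hε0] using this.symm
  have hKb : K = blk (H 0 0) (fun i j => K i.succ j.succ) := by
    ext i j
    refine Fin.cases ?_ (fun i => ?_) i <;> refine Fin.cases ?_ (fun j => ?_) j <;>
      simp [blk, hK00, hK0s, hKs0]
  rw [hKb]
  refine good_blk h0 ?_ (ih _ ?_)
  · rw [← hK00]; exact hKe 0 0
  · ext i j; exact hKe i.succ j.succ

theorem good_diag {ε : D} (hε : ε = 1 ∨ ε = -1) {n : ℕ}
    (ih : ∀ M : Matrix (Fin n) (Fin n) D, Mᴴ = ε • M → Good ε M)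
    {H : Matrix (Fin (n + 1)) (Fin (n + 1)) D} (hH : Hᴴ = ε • H)
    {i : Fin (n + 1)} (h0 : H i i ≠ 0) : Good ε H := by
  let s : Equiv.Perm (Fin (n + 1)) := Equiv.swap 0 i
  let P : Matrix (Fin (n + 1)) (Fin (n + 1)) D := (1 : Matrix _ _ D).submatrix id s
  have hP : IsUnit P := by
    refine ⟨⟨P, (1 : Matrix _ _ D).submatrix s id, ?_, ?_⟩, rfl⟩
    · rw [Matrix.submatrix_mul_equiv]; simp
    · ext a b
      simp [P, Matrix.mul_apply, Matrix.one_apply]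
  refine good_congr hP (good_clear hε ih (herm_congr hε hH) ?_)
  convert h0 using 1
  simp [P, Matrix.mul_apply, Matrix.one_apply, s, Matrix.conjTranspose_apply, apply_ite star]

theorem good_all {ε : D} (hε : ε = 1 ∨ ε = -1) (hD : (2 : D) ≠ 0)
    (hnot : ¬ ((∀ d : D, star d = d) ∧ ε = -1)) {n : ℕ} :
    ∀ H : Matrix (Fin n) (Fin n) D, Hᴴ = ε • H → Good ε H := by
  induction n with
  | zero =>
    intro H hH
    exact ⟨1, isUnit_one, 0, le_rfl, 0, fun i => i.elim0, fun i => i.elim0,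
      by ext i; exact i.elim0⟩
  | succ n ih =>
    intro H hH
    by_cases hd : ∃ i, H i i ≠ 0
    · obtain ⟨i, hi⟩ := hd
      exact good_diag hε ih hH hi
    push Not at hd
    by_cases hz : H = 0
    · exact ⟨1, isUnit_one, 0, Nat.zero_le _, 0, fun i hi => by omega, fun _ _ => rfl,
        by simp [hz]⟩
    obtain ⟨i, j, hij⟩ : ∃ i j, H i j ≠ 0 := by
      by_contra hc
      push Not at hc
      exact hz (by ext i j; exact hc i j)
    have hne : i ≠ j := by rintro rfl; exact hij (hd i)
    have hex : ∃ d : D, d + ε * star d ≠ 0 := by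
      by_contra hc
      push Not at hc
      apply hnot
      have h1 : ε = -1 := by
        have := hc 1
        rw [star_one, mul_one] at this
        exact (neg_eq_of_add_eq_zero_right this).symm
      refine ⟨fun d => ?_, h1⟩
      have := hc d
      rw [h1] at this
      have h2 : d - star d = 0 := by simpa [sub_eq_add_neg] using this
      exact (sub_eq_zero.mp h2).symm
    obtain ⟨d, hd'⟩ := hex
    have hHe : ∀ a b, star (H b a) = ε * H a b := fun a b => by
      have := congrFun (congrFun hH a) b
      simpa [Matrix.conjTranspose_apply] using this
    set c := (H i j)⁻¹ * d with hc
    have hcd : H i j * c = d := by rw [hc, mul_inv_cancel_left₀ hij]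
    have hji : H j i = ε * star (H i j) := by
      rw [hHe j i, ← mul_assoc]
      rcases hε with rfl | rfl <;> simp
    let N : Matrix (Fin (n + 1)) (Fin (n + 1)) D := Matrix.single j i c
    have hN : N * N = 0 := Matrix.single_mul_single_of_ne _ _ _ _ hne _
    refine good_congr (unit_add hN) (good_diag hε ih (i := i) (herm_congr hε hH) ?_)
    convert hd' using 1
    have e1 : (H * N) i i = d := by simp [N, hcd]
    have e2 : (H * N) j i = 0 := by simp [N, hd]
    have e3 : ∀ M : Matrix (Fin (n + 1)) (Fin (n + 1)) D, (Nᴴ * M) i i = star c * M j i := by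
      intro M; simp [N, Matrix.conjTranspose_single]
    have e4 : star c * H j i = ε * star d := by
      have : star d = star c * star (H i j) := by rw [← star_mul, hcd]
      rw [hji, this]
      clear_value c
      rcases hε with rfl | rfl <;> simp
    simp only [Matrix.conjTranspose_add, Matrix.conjTranspose_one, add_mul, mul_add, one_mul,
      mul_one, Matrix.add_apply, Matrix.mul_assoc, e3, e1, e2, e4, hd]
    simp [add_comm]

end HermDiag


open Matrix BigOperators

/-- Diagonalization of a possibly singular ε-hermitian matrix over a division ring with
involution (characteristic ≠ 2), outside the case (ϑ = id, ε = -1): there is an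
invertible `G` with `ϑ(G)ᵀ H G = diag(u₁, …, u_k, 0, …, 0)` where the `u_i` are nonzero
ε-symmetric elements. -/
theorem stmt_5 {D : Type*} [DivisionRing D] (hD : (2 : D) ≠ 0)
    (ϑ : D → D)
    (hϑadd : ∀ x y : D, ϑ (x + y) = ϑ x + ϑ y)
    (hϑmul : ∀ x y : D, ϑ (x * y) = ϑ y * ϑ x)
    (hϑinv : ∀ x : D, ϑ (ϑ x) = x)
    (ε : D) (hε : ε = 1 ∨ ε = -1)
    (hnot : ¬ ((∀ d : D, ϑ d = d) ∧ ε = -1))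
    {ℓ : ℕ} (H : Matrix (Fin ℓ) (Fin ℓ) D)
    (hH : (H.map ϑ)ᵀ = ε • H) :
    ∃ G : Matrix (Fin ℓ) (Fin ℓ) D, IsUnit G ∧
      ∃ k : ℕ, k ≤ ℓ ∧
        ∃ u : Fin ℓ → D,
          (∀ i : Fin ℓ, (i : ℕ) < k → u i ≠ 0 ∧ ϑ (u i) = ε * u i) ∧
          (∀ i : Fin ℓ, k ≤ (i : ℕ) → u i = 0) ∧
          (G.map ϑ)ᵀ * H * G = Matrix.diagonal u := by
  letI : StarRing D :=
    { star := ϑ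
      star_involutive := hϑinv
      star_mul := hϑmul
      star_add := hϑadd }
  exact HermDiag.good_all hε hD hnot H hH
end

section
/- Let F be a field of characteristic different from 2 with a field ordering P, let Φ ∈ M_n(F) be symmetric, invertible, and positive definite at P, and let σ be the involution on M_n(F) given by σ(X) = ΦXᵀΦ⁻¹. Let U ∈ M_n(F) be invertible with σ(U) = U. Then tr(σ(X)UX) >_P 0 for all nonzero X ∈ M_n(F) if and only if Φ⁻¹U is positive definite at P. -/
open Matrix BigOperators

theorem fo_pos_sum {F : Type*} [Field F] (P : FieldOrdering F) {ι : Type*} (s : Finset ι)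
    (f : ι → F) (hf : ∀ i ∈ s, P.nonneg (f i)) : P.nonneg (∑ i ∈ s, f i) := by
  classical
  induction s using Finset.induction_on with
  | empty =>
    rcases P.total 0 with h | h
    · simpa using h
    · simpa using h
  | insert a s ha ih =>
    rw [Finset.sum_insert ha]
    exact P.add_nonneg (hf a (by simp)) (ih fun i hi => hf i (by simp [hi]))

theorem fo_sum_pos {F : Type*} [Field F] (P : FieldOrdering F) {ι : Type*} (s : Finset ι)
    (f : ι → F) (hf : ∀ i ∈ s, P.nonneg (f i)) (i : ι) (hi : i ∈ s) (h0 : f i ≠ 0) :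
    P.pos (∑ i ∈ s, f i) := by
  classical
  refine ⟨fo_pos_sum P s f hf, fun h => h0 ?_⟩
  rw [← Finset.add_sum_erase s f hi] at h
  refine P.eq_zero_of (hf i hi) ?_
  rw [neg_eq_of_add_eq_zero_right h]
  exact fo_pos_sum P _ f fun j hj => hf j (Finset.mem_of_mem_erase hj)

theorem fo_pos_of_mul {F : Type*} [Field F] (P : FieldOrdering F) {a b : F}
    (hab : P.pos (a * b)) (hb : P.pos b) : P.pos a := by
  have ha : a ≠ 0 := left_ne_zero_of_mul hab.2
  refine ⟨?_, ha⟩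
  rcases P.total a with h | h
  · exact h
  · have h1 := P.mul_nonneg h hb.1
    rw [neg_mul] at h1
    exact absurd (P.eq_zero_of hab.1 h1) hab.2

theorem exists_diag {F : Type*} [Field F] (hF : (2 : F) ≠ 0) {n : ℕ}
    (Φ : Matrix (Fin n) (Fin n) F) (hΦsym : Φᵀ = Φ) :
    ∃ (T : Matrix (Fin n) (Fin n) F) (d : Fin n → F), IsUnit T.det ∧ Tᵀ * Φ * T = diagonal d := by
  have : Invertible (2 : F) := invertibleOfNonzero hF
  have hs : LinearMap.IsSymm (Matrix.toBilin' Φ) := by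
    refine ⟨fun x y => ?_⟩
    simp only [Matrix.toBilin'_apply', RingHom.id_apply]
    rw [dotProduct_mulVec, ← mulVec_transpose, hΦsym, dotProduct_comm]
  obtain ⟨v, hv⟩ := LinearMap.BilinForm.exists_orthogonal_basis (B := Matrix.toBilin' Φ) hs
  have hn : Module.finrank F (Fin n → F) = n := by simp
  let b : Module.Basis (Fin n) F (Fin n → F) := v.reindex (finCongr hn)
  let T : Matrix (Fin n) (Fin n) F := (Pi.basisFun F (Fin n)).toMatrix b
  have hT : ∀ i j, T i j = b j i := fun i j => by simp [T, Module.Basis.toMatrix_apply]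
  have hcol : ∀ j, T.col j = b j := fun j => by ext i; exact hT i j
  refine ⟨T, fun i => b i ⬝ᵥ Φ *ᵥ b i, ?_, ?_⟩
  · rw [← Matrix.isUnit_iff_isUnit_det]
    exact ⟨⟨T, b.toMatrix (Pi.basisFun F (Fin n)), by simp [T], by simp [T]⟩, rfl⟩
  · have key : ∀ i j, (Tᵀ * Φ * T) i j = b i ⬝ᵥ Φ *ᵥ b j := by
      intro i j
      rw [← hcol i, ← hcol j, dotProduct_mulVec]
      rfl
    ext i j
    rw [key]
    by_cases hij : i = j
    · subst hij; simp
    · rw [diagonal_apply_ne _ hij]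
      have := hv (i := (finCongr hn).symm i) (j := (finCongr hn).symm j) (by simpa using hij)
      simpa [Function.onFun, Matrix.toBilin'_apply', b] using this

theorem col_quad {F : Type*} [Field F] {n : ℕ} (Y V : Matrix (Fin n) (Fin n) F) (i : Fin n) :
    (Yᵀ * V * Y) i i = Y.col i ⬝ᵥ V *ᵥ Y.col i := by
  rw [dotProduct_mulVec]
  rfl

/-- For `σ = ad_Φ` with `Φ` positive definite at `P` and `U` invertible σ-symmetric,
the trace form `X ↦ tr(σ(X)UX)` is positive definite at `P` iff `Φ⁻¹U` is positive
definite at `P`. -/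
theorem stmt_7 {F : Type*} [Field F] (hF : (2 : F) ≠ 0) {n : ℕ}
    (P : FieldOrdering F)
    (Φ : Matrix (Fin n) (Fin n) F) (hΦsym : Φᵀ = Φ) (hΦ : IsUnit Φ.det)
    (hΦpd : Φ.IsPDAt P)
    (U : Matrix (Fin n) (Fin n) F) (hUunit : IsUnit U) (hUσ : Φ * Uᵀ * Φ⁻¹ = U) :
    (∀ X : Matrix (Fin n) (Fin n) F, X ≠ 0 →
        P.pos ((Φ * Xᵀ * Φ⁻¹) * U * X).trace) ↔
      (Φ⁻¹ * U).IsPDAt P := by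
  have hassoc : ∀ X : Matrix (Fin n) (Fin n) F,
      (Φ * Xᵀ * Φ⁻¹) * U * X = Φ * (Xᵀ * (Φ⁻¹ * U) * X) := fun X => by
    simp only [Matrix.mul_assoc]
  simp only [hassoc]
  generalize Φ⁻¹ * U = V
  constructor
  · intro h v hv
    obtain ⟨i, hi⟩ := Function.ne_iff.mp hv
    have hw : (Pi.single i 1 : Fin n → F) ≠ 0 := by simp
    have hX : vecMulVec v (Pi.single i 1 : Fin n → F) ≠ 0 := by
      intro h0
      have := congrFun (congrFun h0 i) i
      simp [vecMulVec_apply] at this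
      exact hi this
    have h1 := h _ hX
    refine fo_pos_of_mul P ?_ (hΦpd _ hw)
    convert h1 using 1
    rw [transpose_vecMulVec, vecMulVec_mul, vecMulVec_mul_vecMulVec, ← dotProduct_mulVec,
      mul_vecMulVec, trace_vecMulVec]
    simp [mulVec_smul, vecMulVec_smul, dotProduct_comm]
  · intro hV X hX
    obtain ⟨T, d, hT, hd⟩ := exists_diag hF Φ hΦsym
    have hTt : IsUnit (Tᵀ).det := by rwa [det_transpose]
    have hΦ2 : Φ = (Tᵀ)⁻¹ * diagonal d * T⁻¹ := by
      rw [← hd]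
      simp only [Matrix.mul_assoc]
      rw [mul_nonsing_inv _ hT, Matrix.mul_one, nonsing_inv_mul_cancel_left _ _ hTt]
    have hdpos : ∀ i, P.pos (d i) := by
      intro i
      have h1 := col_quad T Φ i
      rw [hd, diagonal_apply_eq] at h1
      rw [h1]
      apply hΦpd
      intro h0
      have : T.det = 0 := det_eq_zero_of_column_eq_zero i fun j => congrFun h0 j
      exact hT.ne_zero this
    let Y := X * (Tᵀ)⁻¹
    have hY : Y ≠ 0 := by
      intro h0
      apply hX
      have : Y * Tᵀ = X := nonsing_inv_mul_cancel_right _ _ hTt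
      rw [← this, h0, Matrix.zero_mul]
    have htr : (Φ * (Xᵀ * V * X)).trace = ∑ i, d i * (Y.col i ⬝ᵥ V *ᵥ Y.col i) := by
      have e : (Φ * (Xᵀ * V * X)).trace = (diagonal d * (Yᵀ * V * Y)).trace := by
        have hYt : Yᵀ = T⁻¹ * Xᵀ := by
          simp [Y, transpose_mul, transpose_nonsing_inv]
        rw [hYt, hΦ2]
        simp only [Matrix.mul_assoc, Y]
        rw [trace_mul_comm]
        simp only [Matrix.mul_assoc]
      rw [e, trace]
      refine Finset.sum_congr rfl fun i _ => ?_
      rw [diag_apply, diagonal_mul, col_quad]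
    rw [htr]
    have hnz : ∃ i, Y.col i ≠ 0 := by
      by_contra hc
      push Not at hc
      exact hY (by ext i j; exact congrFun (hc j) i)
    obtain ⟨i, hi⟩ := hnz
    refine fo_sum_pos P _ _ (fun j _ => P.mul_nonneg (hdpos j).1 ?_) i (Finset.mem_univ i)
      (mul_ne_zero (hdpos i).2 (hV _ hi).2)
    by_cases hj : Y.col j = 0
    · rw [hj, zero_dotProduct]
      simpa using P.total 0
    · exact (hV _ hj).1
end

section
/- Let F be a field of characteristic different from 2, let Φ ∈ M_n(F) be symmetric and invertible, and let σ be the involution on M_n(F) given by σ(X) = ΦXᵀΦ⁻¹. The following are equivalent: (a) for every U ∈ M_n(F) with σ(U) = U, one has [tr(σ(X)UX) ≥_P 0 for every X ∈ M_n(F) and every field ordering P of F] if and only if [there exist finitely many X_1, ..., X_N ∈ M_n(F) with U = Σ_{i=1}^{N} σ(X_i)X_i]; (b) at every field ordering P of F, the matrix Φ is positive definite or negative definite at P. -/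
open Matrix BigOperators

namespace FieldOrdering

variable {F : Type*} [Field F] (P : FieldOrdering F)

lemma nonneg_sq (x : F) : P.nonneg (x * x) := by
  rcases P.total x with h | h
  · exact P.mul_nonneg h h
  · simpa using P.mul_nonneg h h

lemma nonneg_zero_s11 : P.nonneg 0 := by simpa using P.nonneg_sq 0

lemma nonneg_sum_s11 {ι : Type*} (s : Finset ι) (f : ι → F) (h : ∀ i ∈ s, P.nonneg (f i)) :
    P.nonneg (∑ i ∈ s, f i) :=
  Finset.sum_induction f P.nonneg (fun _ _ => P.add_nonneg) P.nonneg_zero_s11 h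

lemma sum_eq_zero {ι : Type*} [DecidableEq ι] (s : Finset ι) (f : ι → F)
    (h : ∀ i ∈ s, P.nonneg (f i)) (h0 : ∑ i ∈ s, f i = 0) : ∀ i ∈ s, f i = 0 := by
  intro i hi
  apply P.eq_zero_of (h i hi)
  rw [← Finset.add_sum_erase s f hi] at h0
  rw [show - f i = ∑ x ∈ s.erase i, f x by linear_combination -h0]
  exact P.nonneg_sum_s11 _ _ fun j hj => h j (Finset.mem_of_mem_erase hj)

end FieldOrdering

section Artin
variable {F : Type*} [Field F]

/-- the semiring `S + x S` -/
def adjoinPos (S : Subsemiring F) (hS : ∀ y, y * y ∈ S) (x : F) : Subsemiring F where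
  carrier := {z | ∃ s ∈ S, ∃ t ∈ S, z = s + x * t}
  zero_mem' := ⟨0, S.zero_mem, 0, S.zero_mem, by simp⟩
  one_mem' := ⟨1, S.one_mem, 0, S.zero_mem, by simp⟩
  add_mem' := by
    rintro _ _ ⟨s, hs, t, ht, rfl⟩ ⟨s', hs', t', ht', rfl⟩
    exact ⟨s + s', S.add_mem hs hs', t + t', S.add_mem ht ht', by ring⟩
  mul_mem' := by
    rintro _ _ ⟨s, hs, t, ht, rfl⟩ ⟨s', hs', t', ht', rfl⟩
    exact ⟨s * s' + x * x * (t * t'),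
      S.add_mem (S.mul_mem hs hs') (S.mul_mem (hS x) (S.mul_mem ht ht')),
      s * t' + s' * t, S.add_mem (S.mul_mem hs ht') (S.mul_mem hs' ht), by ring⟩

theorem artin_sumSq (h2 : (2 : F) ≠ 0) (a : F) (h : ∀ P : FieldOrdering F, P.nonneg a) :
    IsSumSq a := by
  by_contra ha
  let C : Set (Subsemiring F) := {S | (∀ y, y * y ∈ S) ∧ a ∉ S}
  have h0 : Subsemiring.sumSq F ∈ C := by
    refine ⟨fun y => ?_, ?_⟩
    · simpa using IsSumSq.mul_self y
    · simpa using ha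
  obtain ⟨S, -, hSmax⟩ := zorn_le_nonempty₀ C (by
    intro c hc hchain y hy
    refine ⟨sSup c, ⟨fun z => ?_, ?_⟩, fun z hz => le_sSup hz⟩
    · exact (le_sSup hy : y ≤ sSup c) ((hc hy).1 z)
    · rw [Subsemiring.mem_sSup_of_directedOn ⟨y, hy⟩ hchain.directedOn]
      rintro ⟨s, hs, has⟩
      exact (hc hs).2 has) _ h0
  obtain ⟨hsq, haS⟩ := hSmax.prop
  have hneg1 : (-1 : F) ∉ S := by
    intro h1
    apply haS
    have : a = ((a + 1) / 2) * ((a + 1) / 2) + (-1) * (((a - 1) / 2) * ((a - 1) / 2)) := by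
      field_simp; ring
    rw [this]
    exact S.add_mem (hsq _) (S.mul_mem h1 (hsq _))
  have hz : ∀ x, x ∈ S → -x ∈ S → x = 0 := by
    intro x hx hx'
    by_contra hx0
    apply hneg1
    have : (-1 : F) = x * (-x) * (x⁻¹ * x⁻¹) := by field_simp
    rw [this]
    exact S.mul_mem (S.mul_mem hx hx') (hsq _)
  have key : ∀ x, x ∉ S → ∃ s ∈ S, ∃ t ∈ S, a = s + x * t := by
    intro x hx
    by_contra hcon
    have hle : S ≤ adjoinPos S hsq x := fun s hs => ⟨s, hs, 0, S.zero_mem, by simp⟩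
    have := hSmax.le_of_ge (y := adjoinPos S hsq x)
      ⟨fun y => hle (hsq y), hcon⟩ hle
    exact hx (this ⟨0, S.zero_mem, 1, S.one_mem, by simp⟩)
  have htot : ∀ x, x ∈ S ∨ -x ∈ S := by
    intro x
    by_contra hcon
    push Not at hcon
    obtain ⟨s, hs, t, ht, e⟩ := key x hcon.1
    obtain ⟨s', hs', t', ht', e'⟩ := key _ hcon.2
    by_cases h0 : t + t' = 0
    · have : t = 0 := hz t ht (by rw [show -t = t' by linear_combination -h0]; exact ht')
      subst this
      apply haS
      rw [e]; simpa using hs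
    · apply haS
      have : a = (s * t' + s' * t) * (t + t') * ((t + t')⁻¹ * (t + t')⁻¹) := by
        field_simp
        linear_combination t' * e + t * e'
      rw [this]
      exact S.mul_mem (S.mul_mem (S.add_mem (S.mul_mem hs ht') (S.mul_mem hs' ht))
        (S.add_mem ht ht')) (hsq _)
  exact haS (h ⟨fun x => x ∈ S, S.add_mem, S.mul_mem, htot, fun {x} => hz x⟩)

end Artin

section Diag
variable {F : Type*} [Field F] {n : ℕ}

theorem exists_diag_s11 (h2 : (2 : F) ≠ 0) (M : Matrix (Fin n) (Fin n) F) (hM : Mᵀ = M) :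
    ∃ (G H : Matrix (Fin n) (Fin n) F) (d : Fin n → F),
      G * H = 1 ∧ H * G = 1 ∧ M = Gᵀ * diagonal d * G := by
  haveI : Invertible (2 : F) := invertibleOfNonzero h2
  have hsymm : LinearMap.IsSymm (Matrix.toBilin' M) := by
    constructor
    intro x y
    simp only [Matrix.toBilin'_apply', RingHom.id_apply]
    rw [dotProduct_mulVec, ← mulVec_transpose, hM, dotProduct_comm]
  obtain ⟨v, hv⟩ := LinearMap.BilinForm.exists_orthogonal_basis hsymm
  let w : Module.Basis (Fin n) F (Fin n → F) := v.reindex (finCongr (by simp))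
  refine ⟨w.toMatrix (Pi.basisFun F (Fin n)), (Pi.basisFun F (Fin n)).toMatrix w,
    fun i => Matrix.toBilin' M (w i) (w i), ?_, ?_, ?_⟩
  · exact Module.Basis.toMatrix_mul_toMatrix_flip _ _
  · exact Module.Basis.toMatrix_mul_toMatrix_flip _ _
  · have h1 := LinearMap.BilinForm.toMatrix_mul_basis_toMatrix w (Pi.basisFun F (Fin n))
      (Matrix.toBilin' M)
    have h3 : LinearMap.BilinForm.toMatrix w (Matrix.toBilin' M) =
        diagonal (fun i => Matrix.toBilin' M (w i) (w i)) := by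
      ext i j
      rw [LinearMap.BilinForm.toMatrix_apply]
      by_cases hij : i = j
      · subst hij; simp
      · rw [diagonal_apply_ne _ hij]
        simp only [w, Module.Basis.reindex_apply]
        apply hv
        simpa using hij
    rw [h3] at h1
    rw [h1, LinearMap.BilinForm.toMatrix_basisFun, LinearMap.BilinForm.toMatrix'_toBilin']

lemma quad_diag (G : Matrix (Fin n) (Fin n) F) (d x : Fin n → F) :
    x ⬝ᵥ ((Gᵀ * diagonal d * G) *ᵥ x) = ∑ i, d i * ((G *ᵥ x) i * (G *ᵥ x) i) := by
  rw [← mulVec_mulVec, ← mulVec_mulVec, dotProduct_mulVec, vecMul_transpose]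
  simp only [dotProduct, mulVec_diagonal]
  exact Finset.sum_congr rfl fun i _ => by ring

lemma quad_single (G H : Matrix (Fin n) (Fin n) F) (hGH : G * H = 1) (d : Fin n → F) (j : Fin n) :
    (H *ᵥ Pi.single j 1) ⬝ᵥ ((Gᵀ * diagonal d * G) *ᵥ (H *ᵥ Pi.single j 1)) = d j := by
  rw [quad_diag, mulVec_mulVec, hGH, one_mulVec, Finset.sum_eq_single j]
  · simp
  · intro b _ hb; simp [hb]
  · simp

lemma pd_of_pos (P : FieldOrdering F) (G H : Matrix (Fin n) (Fin n) F) (hHG : H * G = 1)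
    (d : Fin n → F) (hd : ∀ i, P.pos (d i)) : (Gᵀ * diagonal d * G).IsPDAt P := by
  intro x hx
  rw [quad_diag]
  have hnn : ∀ i ∈ Finset.univ, P.nonneg (d i * ((G *ᵥ x) i * (G *ᵥ x) i)) :=
    fun i _ => P.mul_nonneg (hd i).1 (P.nonneg_sq _)
  refine ⟨P.nonneg_sum_s11 _ _ hnn, fun h0 => hx ?_⟩
  have hG : G *ᵥ x = 0 := by
    funext i
    have := P.sum_eq_zero _ _ hnn h0 i (Finset.mem_univ _)
    simpa [(hd i).2] using this
  rw [← one_mulVec x, ← hHG, ← mulVec_mulVec, hG, mulVec_zero]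

lemma trace_diag (G W : Matrix (Fin n) (Fin n) F) (d : Fin n → F) :
    ((Gᵀ * diagonal d * G) * Wᵀ * (Gᵀ * diagonal d * G) * W).trace =
      ∑ i, ∑ j, d i * d j * ((G * W * Gᵀ) j i * (G * W * Gᵀ) j i) := by
  have : ((Gᵀ * diagonal d * G) * Wᵀ * (Gᵀ * diagonal d * G) * W).trace
      = (diagonal d * (G * W * Gᵀ)ᵀ * (diagonal d * (G * W * Gᵀ))).trace := by
    simp only [transpose_mul, transpose_transpose, Matrix.mul_assoc]
    rw [trace_mul_comm]
    simp only [Matrix.mul_assoc]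
  rw [this]
  generalize G * W * Gᵀ = Z
  simp only [trace, diag_apply, Matrix.mul_apply (M := diagonal d * Zᵀ), diagonal_mul,
    transpose_apply]
  exact Finset.sum_congr rfl fun i _ => Finset.sum_congr rfl fun j _ => by ring

lemma trace_rank_one (A B : Matrix (Fin n) (Fin n) F) (y w : Fin n → F) :
    (A * (vecMulVec y w)ᵀ * B * vecMulVec y w).trace = (w ⬝ᵥ (A *ᵥ w)) * (y ⬝ᵥ (B *ᵥ y)) := by
  rw [transpose_vecMulVec, mul_vecMulVec A w y, vecMulVec_mul, vecMulVec_mul_vecMulVec,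
    trace_vecMulVec, dotProduct_smul, smul_eq_mul, mul_comm, dotProduct_comm,
    dotProduct_mulVec y B y]

lemma closure_to_fin {A α : Type*} [AddCommMonoid A] (f : α → A) (U : A)
    (hU : U ∈ AddSubmonoid.closure (Set.range f)) :
    ∃ (N : ℕ) (X : Fin N → α), U = ∑ i, f (X i) := by
  induction hU using AddSubmonoid.closure_induction with
  | mem x hx =>
    obtain ⟨y, rfl⟩ := hx
    exact ⟨1, fun _ => y, by simp⟩
  | zero => exact ⟨0, Fin.elim0, by simp⟩
  | add x y _ _ hx hy =>
    obtain ⟨N, X, rfl⟩ := hx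
    obtain ⟨N', X', rfl⟩ := hy
    exact ⟨N + N', Fin.append X X', by simp [Fin.sum_univ_add]⟩

lemma congr_diag_single (G : Matrix (Fin n) (Fin n) F) (j : Fin n) (r : F) :
    Gᵀ * diagonal (Pi.single j r) * G = r • vecMulVec (G j) (G j) := by
  ext i k
  rw [Matrix.mul_apply, Finset.sum_eq_single j]
  · simp [vecMulVec_apply]; ring
  · intro b _ hb; simp [hb]
  · simp

lemma sumSq_closure (h2 : (2 : F) ≠ 0)
    (Φ : Matrix (Fin n) (Fin n) F) (hΦsym : Φᵀ = Φ) (hΦ : IsUnit Φ.det)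
    (U : Matrix (Fin n) (Fin n) F) (hU : Φ * Uᵀ * Φ⁻¹ = U)
    (h : ∀ (P : FieldOrdering F) (X : Matrix (Fin n) (Fin n) F),
            P.nonneg ((Φ * Xᵀ * Φ⁻¹) * U * X).trace) :
    U ∈ AddSubmonoid.closure (Set.range fun X : Matrix (Fin n) (Fin n) F => Φ * Xᵀ * Φ⁻¹ * X) := by
  rcases Nat.eq_zero_or_pos n with hn | hn
  · subst hn
    rw [Subsingleton.elim U 0]
    exact AddSubmonoid.zero_mem _
  haveI : Nonempty (Fin n) := ⟨⟨0, hn⟩⟩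
  have hinvsym : (Φ⁻¹)ᵀ = Φ⁻¹ := by rw [transpose_nonsing_inv, hΦsym]
  -- an anisotropic vector
  obtain ⟨w, hw⟩ : ∃ w, w ⬝ᵥ (Φ *ᵥ w) ≠ 0 := by
    obtain ⟨G, H, d, hGH, -, e⟩ := exists_diag_s11 h2 Φ hΦsym
    by_contra hcon
    push Not at hcon
    have hd : d = 0 := by
      funext j
      rw [← quad_single G H hGH d j, ← e]
      exact hcon _
    rw [hd] at e
    simp at e
    rw [e, det_zero] at hΦ
    exact not_isUnit_zero hΦ
  set c := w ⬝ᵥ (Φ *ᵥ w) with hc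
  have hUS : U = Φ * (Φ⁻¹ * U) := by rw [mul_nonsing_inv_cancel_left _ _ hΦ]
  have hSsym : (Φ⁻¹ * U)ᵀ = Φ⁻¹ * U := by
    conv_rhs => rw [← hU]
    rw [transpose_mul, hinvsym, Matrix.mul_assoc Φ, nonsing_inv_mul_cancel_left _ _ hΦ]
  obtain ⟨G, H, s, hGH, -, e⟩ := exists_diag_s11 h2 _ hSsym
  have hs : ∀ j, IsSumSq (c * s j) := by
    intro j
    apply artin_sumSq h2
    intro P
    have := h P (vecMulVec (H *ᵥ Pi.single j 1) w)
    rw [Matrix.mul_assoc _ Φ⁻¹ U, trace_rank_one, e, quad_single G H hGH] at this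
    exact this
  have hterm : ∀ (q : F), IsSumSq q → ∀ j,
      Φ * (Gᵀ * diagonal (Pi.single j (q / c)) * G) ∈ AddSubmonoid.closure
        (Set.range fun X : Matrix (Fin n) (Fin n) F => Φ * Xᵀ * Φ⁻¹ * X) := by
    intro q hq j
    induction hq with
    | zero => simp
    | sq_add a hq ih =>
      rename_i q'
      rw [congr_diag_single] at ih ⊢
      rw [add_div, add_smul, Matrix.mul_add]
      refine AddSubmonoid.add_mem _ (AddSubmonoid.subset_closure ?_) ih
      refine ⟨vecMulVec (Φ *ᵥ w) ((a / c) • G j), ?_⟩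
      dsimp only
      simp only [Matrix.mul_assoc]
      congr 1
      rw [mul_vecMulVec, mulVec_mulVec, nonsing_inv_mul _ hΦ, one_mulVec, transpose_vecMulVec,
        vecMulVec_mul_vecMulVec, dotProduct_comm, ← hc]
      ext i k
      simp only [vecMulVec_apply, Matrix.smul_apply, Pi.smul_apply, smul_eq_mul]
      field_simp
  rw [hUS, e]
  have : diagonal s = ∑ j, diagonal (Pi.single j ((c * s j) / c)) := by
    ext i k
    rw [Matrix.sum_apply]
    by_cases hik : i = k
    · subst hik
      simp only [diagonal_apply_eq]
      rw [Finset.sum_eq_single i]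
      · rw [Pi.single_eq_same]; field_simp
      · intro b _ hb; rw [Pi.single_eq_of_ne hb.symm]
      · simp
    · simp [diagonal_apply_ne _ hik]
  rw [this, Matrix.mul_sum, Matrix.sum_mul, Matrix.mul_sum]
  exact AddSubmonoid.sum_mem _ fun j _ => hterm _ (hs j) j

end Diag

/-- Answer to the Procesi–Schacher question, split orthogonal case: property (PS') holds
for `(M_n(F), ad_Φ)` iff `Φ` is positive or negative definite at every ordering of `F`. -/
theorem stmt_11 {F : Type*} [Field F] (hF : (2 : F) ≠ 0) {n : ℕ}
    (Φ : Matrix (Fin n) (Fin n) F) (hΦsym : Φᵀ = Φ) (hΦ : IsUnit Φ.det) :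
    (∀ U : Matrix (Fin n) (Fin n) F, Φ * Uᵀ * Φ⁻¹ = U →
      ((∀ (P : FieldOrdering F) (X : Matrix (Fin n) (Fin n) F),
            P.nonneg ((Φ * Xᵀ * Φ⁻¹) * U * X).trace) ↔
        ∃ (N : ℕ) (X : Fin N → Matrix (Fin n) (Fin n) F),
          U = ∑ i, (Φ * (X i)ᵀ * Φ⁻¹) * X i)) ↔
      (∀ P : FieldOrdering F, Φ.IsPDAt P ∨ (-Φ).IsPDAt P) := by
  have hinvsym : (Φ⁻¹)ᵀ = Φ⁻¹ := by rw [transpose_nonsing_inv, hΦsym]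
  obtain ⟨G, H, d, hGH, hHG, e⟩ := exists_diag_s11 hF Φ hΦsym
  constructor
  · intro h P
    have h1 := (h 1 (by simp [mul_nonsing_inv _ hΦ])).2
      ⟨1, fun _ => 1, by simp [mul_nonsing_inv _ hΦ]⟩ P
    have hdd : ∀ i j, P.nonneg (d i * d j) := by
      intro i j
      have h2 := h1 (vecMulVec (Φ *ᵥ (H *ᵥ Pi.single j 1)) (H *ᵥ Pi.single i 1))
      rw [Matrix.mul_one, trace_rank_one, mulVec_mulVec _ Φ⁻¹ Φ, nonsing_inv_mul _ hΦ, one_mulVec,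
        dotProduct_comm (Φ *ᵥ _), e, quad_single G H hGH, quad_single G H hGH] at h2
      exact h2
    have hd0 : ∀ i, d i ≠ 0 := by
      have hdet := hΦ.ne_zero
      rw [e, det_mul, det_mul, det_diagonal] at hdet
      intro i hi
      apply hdet
      rw [Finset.prod_eq_zero (Finset.mem_univ i) hi]
      simp
    by_cases hall : ∀ i, P.nonneg (d i)
    · left
      rw [e]
      exact pd_of_pos P G H hHG d fun i => ⟨hall i, hd0 i⟩
    · right
      push Not at hall
      obtain ⟨i, hi⟩ := hall
      have hi' := (P.total (d i)).resolve_left hi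
      have : -Φ = Gᵀ * diagonal (fun j => - d j) * G := by
        rw [e, ← diagonal_neg, Matrix.mul_neg, Matrix.neg_mul]
      rw [this]
      refine pd_of_pos P G H hHG _ fun j => ⟨?_, neg_ne_zero.2 (hd0 j)⟩
      rcases P.total (d j) with hj | hj
      · exfalso
        have := P.eq_zero_of (hdd i j) (by simpa using P.mul_nonneg hi' hj)
        exact mul_ne_zero (hd0 i) (hd0 j) this
      · exact hj
  · intro hb U hU
    refine ⟨fun h => closure_to_fin (fun X : Matrix (Fin n) (Fin n) F => Φ * Xᵀ * Φ⁻¹ * X) U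
      (sumSq_closure hF Φ hΦsym hΦ U hU h), ?_⟩
    rintro ⟨N, X, rfl⟩ P Y
    have hdd : ∀ i j, P.nonneg (d i * d j) := by
      have hne : ∀ i, (H *ᵥ Pi.single i (1 : F)) ≠ 0 := by
        intro i hi
        have : G *ᵥ (H *ᵥ Pi.single i (1 : F)) = 0 := by rw [hi, mulVec_zero]
        rw [mulVec_mulVec, hGH, one_mulVec] at this
        simpa using congrFun this i
      intro i j
      rcases hb P with hp | hp
      · have hi := (hp _ (hne i)).1
        have hj := (hp _ (hne j)).1
        rw [e, quad_single G H hGH] at hi hj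
        exact P.mul_nonneg hi hj
      · have hi := (hp _ (hne i)).1
        have hj := (hp _ (hne j)).1
        rw [neg_mulVec, dotProduct_neg, e, quad_single G H hGH] at hi hj
        simpa using P.mul_nonneg hi hj
    rw [Matrix.mul_sum, Matrix.sum_mul, trace_sum]
    refine P.nonneg_sum_s11 _ _ fun i _ => ?_
    have hW : Φ * Yᵀ * Φ⁻¹ * (Φ * (X i)ᵀ * Φ⁻¹ * X i) * Y
        = Φ * (Φ⁻¹ * (X i * Y))ᵀ * Φ * (Φ⁻¹ * (X i * Y)) := by
      rw [transpose_mul, transpose_mul, hinvsym]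
      simp only [Matrix.mul_assoc]
      rw [nonsing_inv_mul_cancel_left _ _ hΦ, mul_nonsing_inv_cancel_left _ _ hΦ]
    rw [hW, e, trace_diag]
    exact P.nonneg_sum_s11 _ _ fun i _ => P.nonneg_sum_s11 _ _ fun j _ =>
      P.mul_nonneg (hdd i j) (P.nonneg_sq _)
end
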